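/- arXiv:1411.4796 — 4 statements merged into one kernel-verified Lean document; each statement's English description precedes it below -/
import Mathlib

section
/- It is undecidable whether Attacker has a winning strategy in the Braid Game on the braid group B₃ starting from a non-trivial braid: the predicate on encoded instances (Attacker's finite list of braid words a₁, …, a_r, Defender's finite list of braid words d₁, …, d_s, and an initial braid word c representing a non-identity element of B₃, all braid words being finite words over σ₁^{±1}, σ₂^{±1}) asserting that Attacker has a winning strategy is not a computable predicate. -/
/-- The braid relator `σ₁σ₂σ₁(σ₂σ₁σ₂)⁻¹` of the 3-strand braid group. -/
def braidRels3 : Set (FreeGroup (Fin 2)) :=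
  {FreeGroup.of 0 * FreeGroup.of 1 * FreeGroup.of 0 *
    (FreeGroup.of 1 * FreeGroup.of 0 * FreeGroup.of 1)⁻¹}

/-- The 3-strand braid group `B₃`, presented with generators `σ₁, σ₂` and the relation
`σ₁σ₂σ₁ = σ₂σ₁σ₂`. -/
abbrev B3 : Type := PresentedGroup braidRels3

/-- A braid word over `σ₁^{±1}, σ₂^{±1}`: each letter is a generator index together with a
sign (`true` for the generator, `false` for its inverse). -/
abbrev BraidWord3 : Type := List (Fin 2 × Bool)

/-- The element of `B₃` represented by a braid word. -/
def braid3 (w : BraidWord3) : B3 :=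
  (w.map fun p =>
    if p.2 then (PresentedGroup.of (rels := braidRels3) p.1)
    else (PresentedGroup.of (rels := braidRels3) p.1)⁻¹).prod

/-- An encoded instance of the Braid Game on `B₃`: Attacker's finite list of braid words,
Defender's finite list of braid words, and an initial braid word. -/
abbrev BG3Instance : Type := List BraidWord3 × List BraidWord3 × BraidWord3

/-- The configuration (a braid in `B₃`) after `k` rounds of the Braid Game, starting from
`c0`, when Defender plays the sequence of braids `δ` and Attacker follows the strategy `st`
(a function of the finite history of Defender's choices so far); moves act by right
composition, Defender first. -/
def bg3Pos (c0 : B3) (δ : ℕ → B3) (st : List B3 → B3) : ℕ → B3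
  | 0 => c0
  | k + 1 => bg3Pos c0 δ st k * δ k * st ((List.range (k + 1)).map δ)

/-- Attacker has a winning strategy in the Braid Game on `B₃` with Attacker's braid list
`A`, Defender's braid list `D` and initial braid `c0`: there is a strategy, choosing a
braid from `A` for every finite history of Defender's choices, such that every infinite
play consistent with it reaches the trivial braid after some Attacker move. -/
def BG3AttackerWins (A D : List B3) (c0 : B3) : Prop :=
  ∃ st : List B3 → B3,
    (∀ hist, (∀ x ∈ hist, x ∈ D) → st hist ∈ A) ∧
    ∀ δ : ℕ → B3, (∀ i, δ i ∈ D) → ∃ n, bg3Pos c0 δ st (n + 1) = 1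


namespace BG

/-! ### Embedding `F_∞ × ℤ` into `B₃` -/

/-- The free group of rank two. -/
abbrev F2 := FreeGroup (Fin 2)

/-- The automorphism `u ↦ v`, `v ↦ u⁻¹ v` of the free group of rank two. -/
def phi : MulAut F2 :=
  MonoidHom.toMulEquiv
    (FreeGroup.lift ![FreeGroup.of 1, (FreeGroup.of 0)⁻¹ * FreeGroup.of 1])
    (FreeGroup.lift ![FreeGroup.of 0 * (FreeGroup.of 1)⁻¹, FreeGroup.of 0])
    (by ext i; fin_cases i <;> simp)
    (by ext i; fin_cases i <;> simp)

lemma phi_zero : phi (FreeGroup.of 0) = FreeGroup.of 1 := by simp [phi]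
lemma phi_one : phi (FreeGroup.of 1) = (FreeGroup.of 0)⁻¹ * FreeGroup.of 1 := by simp [phi]

/-- The semidirect product `F₂ ⋊ ℤ`. -/
abbrev SD := F2 ⋊[zpowersHom (MulAut F2) phi] (Multiplicative ℤ)

/-- The map `B₃ → F₂ ⋊ ℤ`. -/
def toSD : B3 →* SD :=
  PresentedGroup.toGroup (rels := braidRels3)
    (f := ![SemidirectProduct.inr (Multiplicative.ofAdd 1),
      SemidirectProduct.inl (FreeGroup.of 0) * SemidirectProduct.inr (Multiplicative.ofAdd 1)])
    (by
      intro r hr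
      rw [braidRels3, Set.mem_singleton_iff] at hr
      subst hr
      rw [map_mul, map_inv, mul_inv_eq_one]
      ext
      · simp [phi_zero, phi_one, pow_two]
      · simp)

/-- First generator. -/
def s1 : B3 := PresentedGroup.of (rels := braidRels3) 0
/-- Second generator. -/
def s2 : B3 := PresentedGroup.of (rels := braidRels3) 1

lemma braid_rel : s1 * s2 * s1 = s2 * s1 * s2 := by
  have : PresentedGroup.mk braidRels3 (FreeGroup.of 0 * FreeGroup.of 1 * FreeGroup.of 0 *
    (FreeGroup.of 1 * FreeGroup.of 0 * FreeGroup.of 1)⁻¹) = 1 := by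
    apply (QuotientGroup.eq_one_iff _).2
    exact Subgroup.subset_normalClosure rfl
  rw [map_mul, map_inv, mul_inv_eq_one] at this
  rw [map_mul, map_mul, map_mul, map_mul] at this
  exact this

/-- The map `F₂ → B₃`. -/
def theta : F2 →* B3 := FreeGroup.lift ![s2 * s1⁻¹, s1 * (s2 * s1⁻¹) * s1⁻¹]

lemma toSD_s1 : toSD s1 = SemidirectProduct.inr (Multiplicative.ofAdd 1) := by
  simp [toSD, s1, PresentedGroup.toGroup.of]

lemma toSD_s2 : toSD s2 = SemidirectProduct.inl (FreeGroup.of 0) *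
    SemidirectProduct.inr (Multiplicative.ofAdd 1) := by
  simp [toSD, s2, PresentedGroup.toGroup.of]

lemma toSD_theta (u : F2) : toSD (theta u) = SemidirectProduct.inl u := by
  have : toSD.comp theta = SemidirectProduct.inl := by
    ext i
    · fin_cases i
      · simp [theta, toSD_s1, toSD_s2]
      · simp only [theta, MonoidHom.comp_apply, FreeGroup.lift_apply_of]
        simp [toSD_s1, toSD_s2, phi_zero]
    · fin_cases i <;> simp [theta, toSD_s1, toSD_s2]
  exact DFunLike.congr_fun this u

/-- The full twist. -/
def zeta : B3 := (s1 * s2 * s1) * (s1 * s2 * s1)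

lemma delta_s1 : (s1 * s2 * s1) * s1 = s2 * (s1 * s2 * s1) := by
  conv_lhs => rw [braid_rel]
  group

lemma delta_s2 : (s1 * s2 * s1) * s2 = s1 * (s1 * s2 * s1) := by
  conv_rhs => rw [braid_rel]
  group

lemma zeta_s1 : zeta * s1 = s1 * zeta := by
  rw [zeta, mul_assoc, delta_s1, ← mul_assoc, delta_s2, mul_assoc]

lemma zeta_s2 : zeta * s2 = s2 * zeta := by
  rw [zeta, mul_assoc, delta_s2, ← mul_assoc, delta_s1, mul_assoc]

lemma zeta_comm (g : B3) : Commute zeta g := by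
  have h : (⊤ : Subgroup B3) ≤ Subgroup.centralizer {zeta} := by
    rw [← PresentedGroup.closure_range_of, Subgroup.closure_le]
    rintro _ ⟨i, rfl⟩
    rw [SetLike.mem_coe, Subgroup.mem_centralizer_singleton_iff]
    fin_cases i
    · exact zeta_s1.symm
    · exact zeta_s2.symm
  have := h (Subgroup.mem_top g)
  rw [Subgroup.mem_centralizer_singleton_iff] at this
  exact this.symm

/-- `F₂ × ℤ → B₃`. -/
def eta2 : F2 × Multiplicative ℤ →* B3 :=
  MonoidHom.noncommCoprod theta (zpowersHom B3 zeta) (by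
    intro u k
    exact ((zeta_comm (theta u)).zpow_left _).symm)

lemma eta2_inj : Function.Injective eta2 := by
  rw [injective_iff_map_eq_one]
  rintro ⟨u, k⟩ h
  have h1 : theta u * zeta ^ (Multiplicative.toAdd k) = 1 := h
  have h2 := congrArg toSD h1
  rw [map_mul, toSD_theta, map_zpow, map_one] at h2
  have h3 := congrArg SemidirectProduct.rightHom h2
  rw [map_mul, map_zpow, map_one, SemidirectProduct.rightHom_inl] at h3
  have h4 : SemidirectProduct.rightHom (toSD zeta) = Multiplicative.ofAdd 6 := by
    simp only [zeta, map_mul, toSD_s1, toSD_s2, SemidirectProduct.rightHom_inl,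
      SemidirectProduct.rightHom_inr]
    rfl
  rw [h4, one_mul, ← ofAdd_zsmul] at h3
  have h5 : Multiplicative.toAdd k = 0 := by
    have := congrArg Multiplicative.toAdd h3
    simpa using this
  rw [h5, zpow_zero, mul_one] at h2
  have h6 : u = 1 := SemidirectProduct.inl_injective (by rw [h2, map_one])
  rw [h6, Prod.mk_eq_one]
  exact ⟨rfl, h5⟩

/-- The shift automorphism of the free group on `ℤ`. -/
def shiftAut : MulAut (FreeGroup ℤ) := FreeGroup.freeGroupCongr (Equiv.addRight 1)

lemma shiftAut_of (i : ℤ) : shiftAut (FreeGroup.of i) = FreeGroup.of (i + 1) := by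
  simp [shiftAut]

lemma shiftAut_zpow (k : ℤ) (i : ℤ) :
    (shiftAut ^ k) (FreeGroup.of i) = FreeGroup.of (i + k) := by
  induction k using Int.induction_on generalizing i with
  | zero => simp
  | succ n ih => rw [zpow_add_one, MulAut.mul_apply, shiftAut_of, ih]; congr 1; ring
  | pred n ih =>
    have h : shiftAut⁻¹ (FreeGroup.of i) = FreeGroup.of (i - 1) := by
      rw [MulAut.inv_apply, MulEquiv.symm_apply_eq, shiftAut_of]; congr 1; ring
    rw [zpow_sub_one, MulAut.mul_apply, h, ih]; congr 1; ring

/-- `F_∞ → F₂`. -/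
def embF : FreeGroup ℤ →* F2 :=
  FreeGroup.lift fun i => FreeGroup.of 0 ^ i * FreeGroup.of 1 * (FreeGroup.of 0 ^ i)⁻¹

lemma embF_inj : Function.Injective embF := by
  let r : F2 →* FreeGroup ℤ ⋊[zpowersHom (MulAut (FreeGroup ℤ)) shiftAut] (Multiplicative ℤ) :=
    FreeGroup.lift ![SemidirectProduct.inr (Multiplicative.ofAdd 1),
      SemidirectProduct.inl (FreeGroup.of 0)]
  have h : r.comp embF = SemidirectProduct.inl := by
    apply FreeGroup.ext_hom
    intro i
    simp only [MonoidHom.comp_apply, embF, FreeGroup.lift_apply_of, map_mul, map_zpow, map_inv, r]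
    simp only [Matrix.cons_val_zero, Matrix.cons_val_one]
    rw [← map_zpow, ← map_inv, ← SemidirectProduct.inl_aut]
    congr 1
    rw [← ofAdd_zsmul, zpowersHom_apply, toAdd_ofAdd, shiftAut_zpow]
    simp
  intro a b hab
  apply SemidirectProduct.inl_injective (φ := zpowersHom (MulAut (FreeGroup ℤ)) shiftAut)
  rw [← h, MonoidHom.comp_apply, MonoidHom.comp_apply, hab]

/-- The big group `F(γ) × ℤ`. -/
abbrev E (γ : Type) := FreeGroup γ × Multiplicative ℤ

lemma exists_embedding (γ : Type) [Countable γ] :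
    ∃ η : E γ →* B3, Function.Injective η := by
  obtain ⟨c, hc⟩ := Countable.exists_injective_nat γ
  let f : FreeGroup γ →* F2 := embF.comp (FreeGroup.map fun x => (c x : ℤ))
  have hf : Function.Injective f :=
    embF_inj.comp (FreeGroup.map_injective (fun a b h => hc (by exact_mod_cast h)))
  refine ⟨eta2.comp (MonoidHom.prodMap f (MonoidHom.id _)), ?_⟩
  exact eta2_inj.comp (Function.Injective.prodMap hf Function.injective_id)

lemma exists_word (g : B3) : ∃ w : BraidWord3, braid3 w = g := by
  obtain ⟨u, rfl⟩ := PresentedGroup.mk_surjective braidRels3 g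
  refine ⟨u.toWord, ?_⟩
  conv_rhs => rw [← FreeGroup.mk_toWord (x := u)]
  generalize u.toWord = l
  unfold braid3
  induction l with
  | nil => simp [← FreeGroup.one_eq_mk]
  | cons p l ih =>
    rw [List.map_cons, List.prod_cons, ih]
    have : FreeGroup.mk (p :: l) = FreeGroup.mk [p] * FreeGroup.mk l := by
      rw [FreeGroup.mul_mk]; rfl
    rw [this, map_mul]
    congr 1
    rcases p with ⟨i, b⟩
    cases b
    · simp only [Bool.false_eq_true, if_false]
      rw [show FreeGroup.mk [(i, false)] = (FreeGroup.of i)⁻¹ by simp [FreeGroup.of, FreeGroup.inv_mk, FreeGroup.invRev], map_inv]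
      rfl
    · simp only [if_true]; rfl

lemma braid3_append (a b : BraidWord3) : braid3 (a ++ b) = braid3 a * braid3 b := by
  simp [braid3]

/-! ### Game lemmas -/

/-- Inductive win for Attacker. -/
inductive AWin (A D : List B3) : B3 → Prop
  | mk (g : B3) (a : B3 → B3) (ha : ∀ d ∈ D, a d ∈ A)
    (h : ∀ d ∈ D, g * d * a d ≠ 1 → AWin A D (g * d * a d)) : AWin A D g

lemma AWin.of {A D : List B3} {g : B3}
    (h : ∀ d ∈ D, ∃ a ∈ A, g * d * a = 1 ∨ AWin A D (g * d * a)) : AWin A D g := by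
  choose! a ha using h
  exact AWin.mk g a (fun d hd => (ha d hd).1) (fun d hd hn => (ha d hd).2.resolve_left hn)

lemma bg3Pos_shift (c0 : B3) (δ : ℕ → B3) (st : List B3 → B3) (k : ℕ) :
    bg3Pos c0 δ st (k + 1) =
      bg3Pos (c0 * δ 0 * st [δ 0]) (fun i => δ (i + 1)) (fun l => st (δ 0 :: l)) k := by
  induction k with
  | zero => simp [bg3Pos]
  | succ k ih =>
    rw [bg3Pos, ih, bg3Pos]
    congr 2
    rw [List.range_succ_eq_map (n := k + 1)]
    simp [Function.comp_def]

lemma AWin.wins {A D : List B3} (hD : D ≠ []) {g : B3} (h : AWin A D g) :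
    BG3AttackerWins A D g := by
  classical
  induction h with
  | mk g a ha h ih =>
    obtain ⟨d0, hd0⟩ := List.exists_mem_of_ne_nil D hD
    have key : ∀ d, ∃ st : List B3 → B3, (∀ hist, (∀ x ∈ hist, x ∈ D) → st hist ∈ A) ∧
        (d ∈ D → g * d * a d ≠ 1 → ∀ δ : ℕ → B3, (∀ i, δ i ∈ D) →
          ∃ n, bg3Pos (g * d * a d) δ st (n + 1) = 1) := by
      intro d
      by_cases hd : d ∈ D ∧ g * d * a d ≠ 1
      · obtain ⟨st, h1, h2⟩ := ih d hd.1 hd.2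
        exact ⟨st, h1, fun _ _ => h2⟩
      · exact ⟨fun _ => a d0, fun _ _ => ha d0 hd0, fun h1 h2 => absurd ⟨h1, h2⟩ hd⟩
    choose S hS1 hS2 using key
    refine ⟨fun l => match l with
      | [] => a d0
      | [d] => a d
      | d :: r => S d r, ?_, ?_⟩
    · intro hist hh
      match hist, hh with
      | [], _ => exact ha d0 hd0
      | [d], hh => exact ha d (hh d (by simp))
      | d :: e :: r, hh => exact hS1 d _ (fun x hx => hh x (List.mem_cons_of_mem _ hx))
    · intro δ hδ
      by_cases h1 : g * δ 0 * a (δ 0) = 1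
      · exact ⟨0, by simpa [bg3Pos] using h1⟩
      · obtain ⟨n, hn⟩ := hS2 (δ 0) (hδ 0) h1 (fun i => δ (i + 1)) (fun i => hδ _)
        refine ⟨n + 1, ?_⟩
        rw [bg3Pos_shift]
        refine Eq.trans ?_ hn
        have : ∀ m, bg3Pos (g * δ 0 * a (δ 0)) (fun i => δ (i + 1)) (fun l => match δ 0 :: l with
            | [] => a d0
            | [d] => a d
            | d :: r => S d r) m = bg3Pos (g * δ 0 * a (δ 0)) (fun i => δ (i + 1)) (S (δ 0)) m := by
          intro m
          induction m with
          | zero => rfl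
          | succ m ihm =>
            rw [bg3Pos, bg3Pos, ihm]
            congr 1
            rw [List.range_succ_eq_map]
            rfl
        exact this (n + 1)

lemma defender_wins {A D : List B3} (Safe : B3 → Prop)
    (hS : ∀ g, Safe g → ∃ d ∈ D, ∀ a ∈ A, g * d * a ≠ 1 ∧ Safe (g * d * a)) {c0 : B3}
    (h0 : Safe c0) : ¬ BG3AttackerWins A D c0 := by
  rintro ⟨st, hst, hwin⟩
  choose! f hf using hS
  let s : ℕ → List B3 × B3 := fun k => Nat.rec ([], c0)
    (fun _ p => (p.1 ++ [f p.2], p.2 * f p.2 * st (p.1 ++ [f p.2]))) k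
  have s_succ : ∀ k, s (k + 1) = ((s k).1 ++ [f (s k).2],
      (s k).2 * f (s k).2 * st ((s k).1 ++ [f (s k).2])) := fun k => rfl
  let δ : ℕ → B3 := fun k => f (s k).2
  have h1 : ∀ k, (s k).1 = (List.range k).map δ := by
    intro k
    induction k with
    | zero => rfl
    | succ k ih => rw [s_succ, List.range_succ, List.map_append, ← ih]; rfl
  have h2 : ∀ k, bg3Pos c0 δ st k = (s k).2 := by
    intro k
    induction k with
    | zero => rfl
    | succ k ih =>
      rw [bg3Pos, ih, ← h1 (k + 1), s_succ]
  have h3 : ∀ k, Safe (s k).2 ∧ ∀ x ∈ (s k).1, x ∈ D := by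
    intro k
    induction k with
    | zero => exact ⟨h0, by simp [s]⟩
    | succ k ih =>
      have hmem : ∀ x ∈ (s (k + 1)).1, x ∈ D := by
        rw [s_succ]
        intro x hx
        rcases List.mem_append.1 hx with hx | hx
        · exact ih.2 x hx
        · rw [List.mem_singleton] at hx
          rw [hx]; exact (hf _ ih.1).1
      exact ⟨((hf _ ih.1).2 _ (hst _ hmem)).2, hmem⟩
  obtain ⟨n, hn⟩ := hwin δ (fun i => (hf _ (h3 i).1).1)
  rw [h2] at hn
  exact ((hf _ (h3 n).1).2 _ (hst _ (h3 (n + 1)).2)).1 hn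

end BG


namespace BG

/-! ### Guarded vector systems and their games -/

/-- The group of affine maps `x ↦ 2 ^ a * x + b`. -/
@[ext] structure Aff where
  /-- exponent of the scaling factor -/
  a : ℤ
  /-- translation part -/
  b : ℚ

namespace Aff

instance : Mul Aff := ⟨fun x y => ⟨x.a + y.a, x.b + 2 ^ x.a * y.b⟩⟩
instance : One Aff := ⟨⟨0, 0⟩⟩
instance : Inv Aff := ⟨fun x => ⟨-x.a, -(2 ^ (-x.a) * x.b)⟩⟩

@[simp] lemma mul_a (x y : Aff) : (x * y).a = x.a + y.a := rfl
@[simp] lemma mul_b (x y : Aff) : (x * y).b = x.b + 2 ^ x.a * y.b := rfl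
@[simp] lemma one_a : (1 : Aff).a = 0 := rfl
@[simp] lemma one_b : (1 : Aff).b = 0 := rfl
@[simp] lemma inv_a (x : Aff) : (x⁻¹).a = -x.a := rfl
@[simp] lemma inv_b (x : Aff) : (x⁻¹).b = -(2 ^ (-x.a) * x.b) := rfl

instance : Group Aff := Group.ofLeftAxioms
  (by intro x y z; ext
      · simp [add_assoc]
      · simp [zpow_add₀]; ring)
  (by intro x; ext <;> simp)
  (by intro x; ext <;> simp)

end Aff

/-- Stack letters: transitions, the input letter and the bottom letter. -/
inductive Ltr (T : Type) : Type
  | tr (t : T) : Ltr T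
  | iota : Ltr T
  | bot : Ltr T

/-- Generators of the free group. -/
inductive Gen (T σ : Type) : Type
  | tag (l : Option T) : Gen T σ
  | ltr (l : Ltr T) : Gen T σ
  | hon : Gen T σ
  | ph (s : Option σ) : Gen T σ

lemma countable_gen (T σ : Type) [Countable T] [Countable σ] : Countable (Gen T σ) := by
  have h1 : Function.Injective (fun l : Ltr T => match l with
      | .tr t => (some (some t) : Option (Option T))
      | .iota => some none
      | .bot => none) := by
    intro x y h
    cases x <;> cases y <;> simp_all
  have : Countable (Ltr T) := h1.countable
  have h2 : Function.Injective (fun l : Gen T σ => match l with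
      | .tag t => (Sum.inl t : Option T ⊕ Option (Ltr T) ⊕ Option σ)
      | .ltr l => Sum.inr (Sum.inl (some l))
      | .hon => Sum.inr (Sum.inl none)
      | .ph s => Sum.inr (Sum.inr s)) := by
    intro x y h
    cases x <;> cases y <;> simp_all
  exact h2.countable

/-- A guarded vector system: integer variables indexed by `σ`, transitions `T` which add
a vector and have guards `v s + m < 0`. -/
structure GVS (T σ : Type) where
  /-- weights -/
  wt : σ → Ltr T → ℤ
  /-- guards -/
  guards : T → List (Option σ × ℤ)
  /-- the transitions in use -/
  Ts : List T
  /-- the variables in use -/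
  Ss : List σ
  /-- all guards in use are about variables in use -/
  hSs : ∀ t ∈ Ts, ∀ p ∈ guards t, ∀ s, p.1 = some s → s ∈ Ss

section hom
variable {γ : Type}

/-- Weighted exponent sum. -/
def ex (φ : γ → ℤ) (u : E γ) : ℤ :=
  Multiplicative.toAdd (FreeGroup.lift (fun x => Multiplicative.ofAdd (φ x)) u.1)

lemma ex_mul (φ : γ → ℤ) (u v : E γ) : ex φ (u * v) = ex φ u + ex φ v := by simp [ex]
lemma ex_inv (φ : γ → ℤ) (u : E γ) : ex φ (u⁻¹) = - ex φ u := by simp [ex]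
lemma ex_one (φ : γ → ℤ) : ex φ (1 : E γ) = 0 := by simp [ex]

/-- A generator as an element of the big group. -/
def gn (x : γ) : E γ := (FreeGroup.of x, 1)
/-- A central element of the big group. -/
def zz (m : ℤ) : E γ := (1, Multiplicative.ofAdd m)

lemma ex_gn (φ : γ → ℤ) (x : γ) : ex φ (gn x) = φ x := by simp [ex, gn]
lemma ex_zz (φ : γ → ℤ) (m : ℤ) : ex φ (zz m) = 0 := by simp [ex, zz]

/-- Exponent of the central generator. -/
def zex (u : E γ) : ℤ := Multiplicative.toAdd u.2

lemma zex_mul (u v : E γ) : zex (u * v) = zex u + zex v := by simp [zex]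
lemma zex_inv (u : E γ) : zex (u⁻¹) = - zex u := by simp [zex]
lemma zex_one : zex (1 : E γ) = 0 := by simp [zex]
lemma zex_gn (x : γ) : zex (gn x) = 0 := by simp [zex, gn]
lemma zex_zz (m : ℤ) : zex (zz m : E γ) = m := by simp [zex, zz]

/-- Affine image. -/
def aff (φ : γ → Aff) (u : E γ) : Aff := FreeGroup.lift φ u.1

lemma aff_mul (φ : γ → Aff) (u v : E γ) : aff φ (u * v) = aff φ u * aff φ v := by simp [aff]
lemma aff_inv (φ : γ → Aff) (u : E γ) : aff φ (u⁻¹) = (aff φ u)⁻¹ := by simp [aff]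
lemma aff_one (φ : γ → Aff) : aff φ (1 : E γ) = 1 := by simp [aff]
lemma aff_gn (φ : γ → Aff) (x : γ) : aff φ (gn x) = φ x := by simp [aff, gn]
lemma aff_zz (φ : γ → Aff) (m : ℤ) : aff φ (zz m) = 1 := by simp [aff, zz]

lemma zz_comm (m : ℤ) (u : E γ) : zz m * u = u * zz m := by
  ext1
  · simp [zz]
  · simp [zz, mul_comm]

lemma zz_add (m n : ℤ) : (zz (m + n) : E γ) = zz m * zz n := by
  simp [zz]

lemma zz_zero : (zz 0 : E γ) = 1 := by simp [zz]

end hom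

set_option linter.unusedSimpArgs false

noncomputable section
open Classical

namespace GVS

variable {T σ : Type} (M : GVS T σ)

/-- Weights extended by the trivial phase. -/
def wtO : Option σ → Ltr T → ℤ
  | none, _ => 0
  | some s, l => M.wt s l

/-- Variables extended by zero. -/
def vO (v : σ → ℤ) : Option σ → ℤ
  | none => 0
  | some s => v s

/-- The transition `t` is enabled. -/
def Valid (v : σ → ℤ) (t : T) : Prop := ∀ p ∈ M.guards t, vO v p.1 + p.2 < 0

/-- The next vector. -/
def next (v : σ → ℤ) (t : T) : σ → ℤ := fun s => v s + M.wt s (.tr t)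

/-- The initial vector. -/
def ini (n : ℕ) : σ → ℤ := fun s => M.wt s .bot + n * M.wt s .iota

/-- All runs terminate. -/
inductive Term : (σ → ℤ) → Prop
  | mk (v : σ → ℤ) (h : ∀ t ∈ M.Ts, M.Valid v t → Term (M.next v t)) : Term v

/-- Honest step. -/
def okM (t : T) : E (Gen T σ) := (gn .hon)⁻¹ * gn (.ltr (.tr t)) * gn .hon
/-- Commit to a phase. -/
def commitM (p : Option σ × ℤ) : E (Gen T σ) := (gn .hon)⁻¹ * gn (.ph p.1) * zz p.2
/-- Pop a letter. -/
def popM (s : Option σ) (l : Ltr T) : E (Gen T σ) :=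
  (gn (.ph s))⁻¹ * (gn (.ltr l))⁻¹ * gn (.ph s) * zz (M.wtO s l)
/-- Final move. -/
def finM (s : Option σ) : E (Gen T σ) :=
  (gn (.ph s))⁻¹ * (gn (.ltr .bot))⁻¹ * zz (M.wtO s .bot)
/-- Decrease the counter. -/
def burnM : E (Gen T σ) := zz (-1)

/-- Phases in use. -/
def phases : List (Option σ) := none :: M.Ss.map some
/-- Letters in use. -/
def Ls : List (Ltr T) := .bot :: .iota :: M.Ts.map .tr
/-- Moves available under each label. -/
def common : List (E (Gen T σ)) :=
  burnM :: M.phases.flatMap (fun s => M.finM s :: M.Ls.map (M.popM s))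
/-- Moves available under a label. -/
def movesOf : Option T → List (E (Gen T σ))
  | none => commitM (none, 0) :: M.common
  | some t => okM t :: ((M.guards t).map commitM ++ M.common)
/-- Labels. -/
def labels : List (Option T) := none :: M.Ts.map some
/-- Attacker moves. -/
def AL : List (E (Gen T σ)) :=
  M.labels.flatMap (fun l => (M.movesOf l).map (fun m => (gn (.tag l))⁻¹ * m))
/-- Defender moves. -/
def DL : List (E (Gen T σ)) := M.labels.map (fun l => gn (.tag l))

lemma mem_AL {x : E (Gen T σ)} : x ∈ M.AL ↔
    ∃ l ∈ M.labels, ∃ m ∈ M.movesOf l, x = (gn (.tag l))⁻¹ * m := by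
  simp [AL, eq_comm]

lemma mem_common {x : E (Gen T σ)} (h : x ∈ M.common) :
    x = burnM ∨ (∃ s, x = M.finM s) ∨ ∃ s l, x = M.popM s l := by
  rw [common, List.mem_cons] at h
  rcases h with h | h
  · exact Or.inl h
  · right
    rw [List.mem_flatMap] at h
    obtain ⟨s, _, h⟩ := h
    rw [List.mem_cons] at h
    rcases h with h | h
    · exact Or.inl ⟨s, h⟩
    · rw [List.mem_map] at h
      obtain ⟨l, _, h⟩ := h
      exact Or.inr ⟨s, l, h.symm⟩

/-! #### Homomorphisms -/

/-- Weight of the honesty marker. -/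
def wEf : Gen T σ → ℤ
  | .hon => 1
  | _ => 0
/-- Number of stack letters. -/
def wN : Gen T σ → ℤ
  | .ltr _ => 1
  | _ => 0
/-- Weight of a tag. -/
def wTag (l : Option T) : Gen T σ → ℤ
  | .tag l' => if l' = l then 1 else 0
  | _ => 0
/-- Weight in a phase. -/
def wV (s : Option σ) : Gen T σ → ℤ
  | .ltr l => M.wtO s l
  | _ => 0
/-- Affine weights. -/
def wA (s : Option σ) : Gen T σ → Aff
  | .tag _ => 1
  | .ltr _ => ⟨0, 1⟩
  | .hon => ⟨1, 0⟩
  | .ph s' => if s' = s then 1 else ⟨-1, 0⟩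

/-- Value of a phase. -/
def V (s : Option σ) (u : E (Gen T σ)) : ℤ := ex (M.wV s) u + zex u

lemma V_mul (s : Option σ) (u v : E (Gen T σ)) : M.V s (u * v) = M.V s u + M.V s v := by
  simp [V, ex_mul, zex_mul]; ring

/-- Still alive after a deviation with phase `s`. -/
def Live (s : Option σ) (u : E (Gen T σ)) : Prop :=
  ((ex wEf u = 1 ∧ s = none ∧ 1 ≤ (aff (wA s) u).a) ∨ (ex wEf u = 0 ∧ 0 ≤ (aff (wA s) u).a)) ∧
  (aff (wA s) u).b ≤ ex wN u ∧ (M.V s u < 0 ∨ (aff (wA s) u).b < ex wN u)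

/-- Attacker has deviated. -/
def Post (u : E (Gen T σ)) : Prop := ex wEf u < 0 ∨ ∃ s, M.Live s u

/-- Honest positions. -/
def Honest (v : σ → ℤ) (u : E (Gen T σ)) : Prop :=
  (∀ l, ex (wTag l) u = 0) ∧ ex wEf u = 1 ∧
  (∀ s, (aff (wA s) u).a = 1 ∧ (aff (wA s) u).b = ex wN u) ∧ ∀ s, M.V s u = vO v s

lemma Post.ne_one {u : E (Gen T σ)} (h : M.Post u) : u ≠ 1 := by
  rintro rfl
  rcases h with h | ⟨s, h1, h2, h3⟩
  · simp [ex_one] at h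
  · simp [ex_one, V, zex_one, aff_one] at h3

lemma Honest.ne_one {v : σ → ℤ} {u : E (Gen T σ)} (h : M.Honest v u) : u ≠ 1 := by
  rintro rfl
  have := h.2.1
  simp [ex_one] at this

lemma Live.common {s : Option σ} {u m : E (Gen T σ)} (h : M.Live s u) (hm : m ∈ M.common) :
    M.Live s (u * m) := by
  obtain ⟨h1, h2, h3⟩ := h
  have ha : 0 ≤ (aff (wA s) u).a := by
    rcases h1 with h | h
    · omega
    · exact h.2
  have hp : (1 : ℚ) ≤ 2 ^ (aff (wA s) u).a := one_le_zpow₀ (by norm_num) ha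
  rcases M.mem_common hm with rfl | ⟨t, rfl⟩ | ⟨t, l, rfl⟩
  · simp only [Live, burnM, ex_mul, ex_zz, aff_mul, aff_zz, V_mul, mul_one, add_zero]
    refine ⟨h1, h2, ?_⟩
    rcases h3 with h | h
    · left; simp only [V, ex_zz, zex_zz] at h ⊢; omega
    · exact Or.inr h
  · by_cases hts : t = s
    · subst hts
      simp only [Live, finM, ex_mul, ex_zz, aff_mul, aff_zz, V_mul, mul_one, add_zero, ex_inv,
        aff_inv, ex_gn, aff_gn, wA, if_true, wEf, wN, V, zex_mul, zex_zz, zex_inv, zex_gn, wV,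
        inv_one, one_mul, Aff.mul_a, Aff.mul_b, Aff.inv_a, Aff.inv_b] at h3 ⊢
      refine ⟨by simpa using h1, ?_, ?_⟩
      · simp; linarith
      · rcases h3 with h | h
        · left; omega
        · right; simp; linarith
    · simp only [Live, finM, ex_mul, ex_zz, aff_mul, aff_zz, V_mul, mul_one, add_zero, ex_inv,
        aff_inv, ex_gn, aff_gn, wA, if_neg hts, wEf, wN, V, zex_mul, zex_zz, zex_inv, zex_gn, wV,
        Aff.mul_a, Aff.mul_b, Aff.inv_a, Aff.inv_b] at h3 ⊢
      refine ⟨?_, ?_, Or.inr ?_⟩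
      · rcases h1 with ⟨e, hs, h⟩ | ⟨e, h⟩
        · exact Or.inl ⟨by simpa using e, hs, by simp; omega⟩
        · exact Or.inr ⟨by simpa using e, by simp; omega⟩
      · simp [zpow_add₀]; linarith
      · simp [zpow_add₀]; linarith
  · by_cases hts : t = s
    · subst hts
      simp only [Live, popM, ex_mul, ex_zz, aff_mul, aff_zz, V_mul, mul_one, add_zero, ex_inv,
        aff_inv, ex_gn, aff_gn, wA, if_true, wEf, wN, V, zex_mul, zex_zz, zex_inv, zex_gn, wV,
        inv_one, one_mul, Aff.mul_a, Aff.mul_b, Aff.inv_a, Aff.inv_b] at h3 ⊢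
      refine ⟨by simpa using h1, ?_, ?_⟩
      · simp; linarith
      · rcases h3 with h | h
        · left; omega
        · right; simp; linarith
    · simp only [Live, popM, ex_mul, ex_zz, aff_mul, aff_zz, V_mul, mul_one, add_zero, ex_inv,
        aff_inv, ex_gn, aff_gn, wA, if_neg hts, wEf, wN, V, zex_mul, zex_zz, zex_inv, zex_gn, wV,
        Aff.mul_a, Aff.mul_b, Aff.inv_a, Aff.inv_b] at h3 ⊢
      refine ⟨?_, ?_, Or.inr ?_⟩
      · rcases h1 with ⟨e, hs, h⟩ | ⟨e, h⟩
        · exact Or.inl ⟨by simpa using e, hs, by simp; omega⟩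
        · exact Or.inr ⟨by simpa using e, by simp; omega⟩
      · simp [zpow_add₀]; linarith
      · simp [zpow_add₀]; linarith

lemma ef_common {m : E (Gen T σ)} (hm : m ∈ M.common) : ex wEf m = 0 := by
  rcases M.mem_common hm with rfl | ⟨t, rfl⟩ | ⟨t, l, rfl⟩
  · simp [burnM, ex_zz]
  · simp [finM, ex_zz, ex_mul, ex_inv, ex_gn, wEf]
  · simp [popM, ex_zz, ex_mul, ex_inv, ex_gn, wEf]

lemma tag_common {m : E (Gen T σ)} (hm : m ∈ M.common) (l : Option T) : ex (wTag l) m = 0 := by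
  rcases M.mem_common hm with rfl | ⟨t, rfl⟩ | ⟨t, l, rfl⟩
  · simp [burnM, ex_zz]
  · simp [finM, ex_zz, ex_mul, ex_inv, ex_gn, wTag]
  · simp [popM, ex_zz, ex_mul, ex_inv, ex_gn, wTag]

lemma tag_moves {m : E (Gen T σ)} {l' : Option T} (hm : m ∈ M.movesOf l') (l : Option T) :
    ex (wTag l) m = 0 := by
  cases l' with
  | none =>
    rcases List.mem_cons.1 hm with rfl | hm
    · simp [commitM, ex_zz, ex_mul, ex_inv, ex_gn, wTag]
    · exact M.tag_common hm l
  | some t =>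
    rcases List.mem_cons.1 hm with rfl | hm
    · simp [okM, ex_mul, ex_inv, ex_gn, wTag]
    · rcases List.mem_append.1 hm with hm | hm
      · obtain ⟨p, _, rfl⟩ := List.mem_map.1 hm
        simp [commitM, ex_zz, ex_mul, ex_inv, ex_gn, wTag]
      · exact M.tag_common hm l

lemma Post.move {u m : E (Gen T σ)} (h : M.Post u) (hm : m ∈ M.movesOf none) :
    M.Post (u * m) := by
  rcases List.mem_cons.1 hm with rfl | hm
  · have he : ex wEf (commitM (none, 0) : E (Gen T σ)) = -1 := by
      simp [commitM, ex_zz, ex_mul, ex_inv, ex_gn, wEf]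
    rcases h with h | ⟨s, h1, h2, h3⟩
    · left; rw [ex_mul, he]; omega
    · rcases h1 with ⟨h1, rfl, h4⟩ | h1
      · right
        refine ⟨none, Or.inr ⟨by rw [ex_mul, he, h1]; rfl, ?_⟩, ?_, ?_⟩
        · simp [commitM, aff_mul, aff_inv, aff_gn, aff_zz, wA]; omega
        · simpa [commitM, aff_mul, aff_inv, aff_gn, aff_zz, wA, ex_mul, ex_inv, ex_gn, wN, ex_zz]
            using h2
        · simpa [commitM, aff_mul, aff_inv, aff_gn, aff_zz, wA, ex_mul, ex_inv, ex_gn, wN, ex_zz,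
            V_mul, V, zex_mul, zex_inv, zex_gn, zex_zz, wV] using h3
      · left; rw [ex_mul, he]; omega
  · rcases h with h | ⟨s, h⟩
    · left; rw [ex_mul, M.ef_common hm]; omega
    · exact Or.inr ⟨s, h.common M hm⟩

lemma Honest.move {v : σ → ℤ} {u m : E (Gen T σ)} {t : T} (h : M.Honest v u)
    (ht : M.Valid v t) (hm : m ∈ M.movesOf (some t)) :
    M.Honest (M.next v t) (u * m) ∨ M.Post (u * m) := by
  obtain ⟨h1, h2, h3, h4⟩ := h
  rcases List.mem_cons.1 hm with rfl | hm
  · left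
    refine ⟨fun l => ?_, ?_, fun s => ⟨?_, ?_⟩, fun s => ?_⟩
    · rw [ex_mul, h1, M.tag_moves hm]; rfl
    · simp [okM, ex_mul, ex_inv, ex_gn, wEf, h2]
    · simp [okM, aff_mul, aff_inv, aff_gn, wA, h3]
    · simp [okM, aff_mul, aff_inv, aff_gn, wA, h3, ex_mul, ex_inv, ex_gn, wN]
    · rw [V_mul, h4]
      cases s <;>
      simp [okM, V, ex_mul, ex_inv, ex_gn, zex_mul, zex_inv, zex_gn, wV, wtO, vO, next]
  · right
    rcases List.mem_append.1 hm with hm | hm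
    · obtain ⟨p, hp, rfl⟩ := List.mem_map.1 hm
      right
      refine ⟨p.1, Or.inr ⟨?_, ?_⟩, ?_, Or.inl ?_⟩
      · simp [commitM, ex_zz, ex_mul, ex_inv, ex_gn, wEf, h2]
      · simp [commitM, aff_mul, aff_inv, aff_gn, aff_zz, wA, h3]
      · simp [commitM, aff_mul, aff_inv, aff_gn, aff_zz, wA, h3, ex_mul, ex_inv, ex_gn, wN, ex_zz]
      · rw [V_mul, h4]
        have := ht p hp
        simpa [commitM, V, ex_mul, ex_inv, ex_gn, zex_mul, zex_inv, zex_gn, wV, ex_zz, zex_zz]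
          using this
    · right
      refine ⟨none, ?_⟩
      obtain ⟨h5, h6⟩ := h3 none
      have h7 := h4 none
      have e1 := ex_mul wEf u m
      rw [M.ef_common hm, h2] at e1
      rcases M.mem_common hm with rfl | ⟨t, rfl⟩ | ⟨t, l, rfl⟩
      · simp only [Live, burnM, ex_mul, ex_zz, aff_mul, aff_zz, V_mul, mul_one, add_zero]
        refine ⟨Or.inl ⟨h2, trivial, h5.ge⟩, h6.le, Or.inl ?_⟩
        rw [h7]; simp [vO, V, ex_zz, zex_zz]
      · have : 1 ≤ (aff (wA none) (u * M.finM t)).a ∧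
            (aff (wA none) (u * M.finM t)).b < ex wN (u * M.finM t) := by
          by_cases hts : t = none
          · subst hts
            simp [finM, aff_mul, aff_inv, aff_gn, aff_zz, wA, h5, h6, ex_mul, ex_inv, ex_gn, wN,
              ex_zz]
            linarith
          · simp [finM, aff_mul, aff_inv, aff_gn, aff_zz, wA, h5, h6, ex_mul, ex_inv, ex_gn, wN,
              ex_zz, hts]
            linarith
        exact ⟨Or.inl ⟨by simpa using e1, rfl, this.1⟩, this.2.le, Or.inr this.2⟩
      · have : 1 ≤ (aff (wA none) (u * M.popM t l)).a ∧
            (aff (wA none) (u * M.popM t l)).b < ex wN (u * M.popM t l) := by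
          by_cases hts : t = none
          · subst hts
            simp [popM, aff_mul, aff_inv, aff_gn, aff_zz, wA, h5, h6, ex_mul, ex_inv, ex_gn, wN,
              ex_zz]
            linarith
          · simp [popM, aff_mul, aff_inv, aff_gn, aff_zz, wA, h5, h6, ex_mul, ex_inv, ex_gn, wN,
              ex_zz, hts]
            linarith
        exact ⟨Or.inl ⟨by simpa using e1, rfl, this.1⟩, this.2.le, Or.inr this.2⟩

/-- The initial position. -/
def start (n : ℕ) : E (Gen T σ) := gn (.ltr .bot) * gn (.ltr .iota) ^ n * gn .hon

lemma ex_pow {γ : Type} (φ : γ → ℤ) (u : E γ) (n : ℕ) : ex φ (u ^ n) = n * ex φ u := by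
  simp [ex]

lemma aff_pow {γ : Type} (φ : γ → Aff) (u : E γ) (n : ℕ) : aff φ (u ^ n) = aff φ u ^ n := by
  simp [aff]

lemma zex_pow {γ : Type} (u : E γ) (n : ℕ) : zex (u ^ n) = n * zex u := by
  simp [zex]

lemma honest_start (n : ℕ) : M.Honest (M.ini n) (start n) := by
  have hp : ∀ n : ℕ, (⟨0, 1⟩ : Aff) ^ n = ⟨0, n⟩ := by
    intro n
    induction n with
    | zero => rfl
    | succ n ih => rw [pow_succ, ih]; ext <;> simp
  refine ⟨fun l => ?_, ?_, fun s => ⟨?_, ?_⟩, fun s => ?_⟩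
  · simp [start, ex_mul, ex_pow, ex_gn, wTag]
  · simp [start, ex_mul, ex_pow, ex_gn, wEf]
  · simp [start, aff_mul, aff_pow, aff_gn, wA, hp]
  · simp [start, aff_mul, aff_pow, aff_gn, wA, hp, ex_mul, ex_pow, ex_gn, wN]
  · cases s <;>
    simp [start, ini, vO, V, ex_mul, ex_pow, ex_gn, wV, wtO, zex_mul, zex_pow, zex_gn]

variable (η : E (Gen T σ) →* B3)

theorem defender (hη : Function.Injective η) (Inf : (σ → ℤ) → Prop)
    (hInf : ∀ v, Inf v → ∃ t ∈ M.Ts, M.Valid v t ∧ Inf (M.next v t)) (n : ℕ)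
    (h0 : Inf (M.ini n)) :
    ¬ BG3AttackerWins (M.AL.map η) (M.DL.map η) (η (start n)) := by
  have hne : ∀ u : E (Gen T σ), u ≠ 1 → η u ≠ 1 := fun u hu h => hu (hη (by rw [h, map_one]))
  have hD : ∀ l ∈ M.labels, η (gn (.tag l)) ∈ M.DL.map η := fun l hl =>
    List.mem_map_of_mem (List.mem_map_of_mem (f := fun l => gn (Gen.tag l)) hl)
  have hnone : none ∈ M.labels := by simp [labels]
  have hmis : ∀ (u m : E (Gen T σ)) (l l' : Option T), m ∈ M.movesOf l' → l ≠ l' →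
      ex (wTag l) u = 0 → 1 ≤ ex (wTag l) (u * gn (.tag l) * ((gn (.tag l'))⁻¹ * m)) := by
    intro u m l l' hm hl hu
    rw [ex_mul, ex_mul, ex_mul, M.tag_moves hm, hu]
    simp [ex_inv, ex_gn, wTag, hl.symm]
  apply defender_wins (fun g => ∃ u, g = η u ∧ ((∃ v, Inf v ∧ M.Honest v u) ∨
    (M.Post u ∧ ex (wTag none) u = 0) ∨ ∃ l ∈ M.labels, 1 ≤ ex (wTag l) u))
  · rintro g ⟨u, rfl, ⟨v, hv, hu⟩ | ⟨hu, hu0⟩ | ⟨l, hl, hu⟩⟩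
    · obtain ⟨t, ht, hval, hnext⟩ := hInf v hv
      have hmem : some t ∈ M.labels := by simp [labels, ht]
      refine ⟨η (gn (.tag (some t))), hD _ hmem, ?_⟩
      intro a ha
      obtain ⟨a', ha', rfl⟩ := List.mem_map.1 ha
      obtain ⟨l', hl', m, hm, rfl⟩ := M.mem_AL.1 ha'
      rw [← map_mul, ← map_mul]
      by_cases hl : some t = l'
      · subst hl
        have e : u * gn (.tag (some t)) * ((gn (.tag (some t)))⁻¹ * m) = u * m := by group
        rw [e]
        rcases hu.move M hval hm with h | h
        · exact ⟨hne _ (h.ne_one M), _, rfl, Or.inl ⟨_, hnext, h⟩⟩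
        · refine ⟨hne _ (h.ne_one M), _, rfl, Or.inr (Or.inl ⟨h, ?_⟩)⟩
          rw [ex_mul, M.tag_moves hm, hu.1]; rfl
      · have := hmis u m _ _ hm hl (hu.1 _)
        refine ⟨hne _ ?_, _, rfl, Or.inr (Or.inr ⟨_, hmem, this⟩)⟩
        intro h
        rw [h, ex_one] at this
        omega
    · refine ⟨η (gn (.tag none)), hD _ hnone, ?_⟩
      intro a ha
      obtain ⟨a', ha', rfl⟩ := List.mem_map.1 ha
      obtain ⟨l', hl', m, hm, rfl⟩ := M.mem_AL.1 ha'
      rw [← map_mul, ← map_mul]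
      by_cases hl : none = l'
      · subst hl
        have e : u * gn (.tag none) * ((gn (.tag none))⁻¹ * m) = u * m := by group
        rw [e]
        have h := hu.move M hm
        refine ⟨hne _ (h.ne_one M), _, rfl, Or.inr (Or.inl ⟨h, ?_⟩)⟩
        rw [ex_mul, M.tag_moves hm, hu0]; rfl
      · have := hmis u m _ _ hm hl hu0
        refine ⟨hne _ ?_, _, rfl, Or.inr (Or.inr ⟨_, hnone, this⟩)⟩
        intro h
        rw [h, ex_one] at this
        omega
    · refine ⟨η (gn (.tag l)), hD _ hl, ?_⟩
      intro a ha
      obtain ⟨a', ha', rfl⟩ := List.mem_map.1 ha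
      obtain ⟨l', hl', m, hm, rfl⟩ := M.mem_AL.1 ha'
      rw [← map_mul, ← map_mul]
      have : 1 ≤ ex (wTag l) (u * gn (.tag l) * ((gn (.tag l'))⁻¹ * m)) := by
        rw [ex_mul, ex_mul, ex_mul, M.tag_moves hm, ex_inv, ex_gn, ex_gn]
        simp only [wTag, if_true]
        split_ifs <;> omega
      refine ⟨hne _ ?_, _, rfl, Or.inr (Or.inr ⟨_, hl, this⟩)⟩
      intro h
      rw [h, ex_one] at this
      omega
  · exact ⟨_, rfl, Or.inl ⟨_, h0, M.honest_start n⟩⟩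

/-! #### Attacker's side -/

/-- A stack word. -/
def stk (w : List (Ltr T)) : E (Gen T σ) := (w.map (fun l => gn (.ltr l))).prod

lemma win_of_label {u : E (Gen T σ)}
    (h : ∀ l ∈ M.labels, ∃ m ∈ M.movesOf l, u * m = 1 ∨
      AWin (M.AL.map η) (M.DL.map η) (η (u * m))) :
    AWin (M.AL.map η) (M.DL.map η) (η u) := by
  apply AWin.of
  intro d hd
  obtain ⟨d', hd', rfl⟩ := List.mem_map.1 hd
  obtain ⟨l, hl, rfl⟩ := List.mem_map.1 hd'
  obtain ⟨m, hm, h⟩ := h l hl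
  refine ⟨η ((gn (.tag l))⁻¹ * m), List.mem_map_of_mem (M.mem_AL.2 ⟨l, hl, m, hm, rfl⟩), ?_⟩
  rw [← map_mul, ← map_mul]
  have e : u * gn (.tag l) * ((gn (.tag l))⁻¹ * m) = u * m := by group
  rw [e]
  rcases h with h | h
  · left; rw [h, map_one]
  · exact Or.inr h

lemma common_sub {l : Option T} {m : E (Gen T σ)} (h : m ∈ M.common) : m ∈ M.movesOf l := by
  cases l
  · exact List.mem_cons_of_mem _ h
  · exact List.mem_cons_of_mem _ (List.mem_append_right _ h)

lemma burn_mem : burnM ∈ M.common := List.mem_cons_self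

lemma fin_mem {s : Option σ} (hs : s ∈ M.phases) : M.finM s ∈ M.common :=
  List.mem_cons_of_mem _ (List.mem_flatMap.2 ⟨s, hs, List.mem_cons_self⟩)

lemma pop_mem {s : Option σ} (hs : s ∈ M.phases) {l : Ltr T} (hl : l ∈ M.Ls) :
    M.popM s l ∈ M.common :=
  List.mem_cons_of_mem _ (List.mem_flatMap.2
    ⟨s, hs, List.mem_cons_of_mem _ (List.mem_map_of_mem hl)⟩)

lemma win_phase {s : Option σ} (hs : s ∈ M.phases) (w : List (Ltr T)) (hw : ∀ l ∈ w, l ∈ M.Ls)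
    (k : ℤ) (hk : 0 ≤ k + (w.map (M.wtO s)).sum + M.wtO s .bot) :
    AWin (M.AL.map η) (M.DL.map η)
      (η (gn (.ltr .bot) * stk w * gn (.ph s) * zz k)) := by
  induction w using List.reverseRecOn generalizing k with
  | nil =>
    simp only [List.map_nil, List.sum_nil, add_zero] at hk
    obtain ⟨j, hj⟩ := Int.eq_ofNat_of_zero_le hk
    induction j generalizing k with
    | zero =>
      apply M.win_of_label
      intro l _
      refine ⟨_, M.common_sub (M.fin_mem hs), Or.inl ?_⟩
      have e : gn (.ltr .bot) * stk [] * gn (.ph s) * zz k * M.finM s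
          = (zz k * zz (M.wtO s .bot) : E (Gen T σ)) := by
        rw [mul_assoc, zz_comm, finM]
        have := zz_comm (M.wtO s .bot) (zz k : E (Gen T σ))
        simp only [stk, List.map_nil, List.prod_nil, mul_one]
        rw [← this]
        group
      rw [e, ← zz_add, hj]
      simp [zz_zero]
    | succ j ih =>
      apply M.win_of_label
      intro l _
      refine ⟨_, M.common_sub M.burn_mem, Or.inr ?_⟩
      have := ih (k - 1) (by push_cast at hj; omega) (by push_cast at hj; omega)
      rwa [burnM, mul_assoc, ← zz_add]
  | append_singleton w l ih =>
    apply M.win_of_label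
    intro l' _
    refine ⟨_, M.common_sub (M.pop_mem hs (hw l (by simp))), Or.inr ?_⟩
    have := ih (fun x hx => hw x (by simp [hx])) (k + M.wtO s l) (by
      simp only [List.map_append, List.sum_append, List.map_cons, List.map_nil, List.sum_cons,
        List.sum_nil] at hk
      omega)
    convert this using 2
    rw [mul_assoc _ (zz k), zz_comm, popM, add_comm k, zz_add]
    simp only [stk, List.map_append, List.prod_append, List.map_cons, List.map_nil, List.prod_cons,
      List.prod_nil]
    group

lemma sum_none (w : List (Ltr T)) : (w.map (M.wtO none)).sum = 0 := by
  have : M.wtO none = fun _ => 0 := by funext l; rfl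
  rw [this]; simp

lemma win_honest (v : σ → ℤ) (hv : M.Term v) (w : List (Ltr T)) (hw : ∀ l ∈ w, l ∈ M.Ls)
    (hvw : ∀ s, v s = (w.map (M.wt s)).sum + M.wt s .bot) :
    AWin (M.AL.map η) (M.DL.map η) (η (gn (.ltr .bot) * stk w * gn .hon)) := by
  induction hv generalizing w with
  | mk v h ih =>
    apply M.win_of_label
    intro l hl
    have hcom : ∀ p : Option σ × ℤ, gn (.ltr .bot) * stk w * gn .hon * commitM p =
        (gn (.ltr .bot) * stk w * gn (.ph p.1) * zz p.2 : E (Gen T σ)) := by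
      intro p; rw [commitM]; group
    cases l with
    | none =>
      refine ⟨commitM (none, 0), List.mem_cons_self, Or.inr ?_⟩
      rw [hcom]
      apply M.win_phase η (by simp [phases]) w hw
      simp [M.sum_none, wtO]
    | some t =>
      have ht : t ∈ M.Ts := by simpa [labels] using hl
      by_cases hval : M.Valid v t
      · refine ⟨okM t, List.mem_cons_self, Or.inr ?_⟩
        have := ih t ht hval (w ++ [.tr t]) (by
            intro l hl
            rcases List.mem_append.1 hl with hl | hl
            · exact hw l hl
            · rw [List.mem_singleton] at hl
              simp [Ls, hl, ht]) (by
            intro s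
            simp [next, hvw s]; ring)
        convert this using 2
        simp only [okM, stk, List.map_append, List.prod_append, List.map_cons, List.map_nil,
          List.prod_cons, List.prod_nil]
        group
      · simp only [Valid, not_forall, not_lt] at hval
        obtain ⟨p, hp, hlt⟩ := hval
        refine ⟨commitM p, List.mem_cons_of_mem _ (List.mem_append_left _
          (List.mem_map_of_mem hp)), Or.inr ?_⟩
        rw [hcom]
        rcases p with ⟨s, m⟩
        cases s with
        | none =>
          apply M.win_phase η (by simp [phases]) w hw
          simpa [M.sum_none, wtO, vO] using hlt
        | some s =>
          apply M.win_phase η (by simpa [phases] using M.hSs t ht _ hp s rfl) w hw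
          simp only [vO, hvw s] at hlt
          have : M.wtO (some s) = M.wt s := by ext l; rfl
          rw [this]
          omega

theorem attacker (n : ℕ) (h : M.Term (M.ini n)) :
    BG3AttackerWins (M.AL.map η) (M.DL.map η) (η (start n)) := by
  apply AWin.wins
  · simp [DL, labels]
  · have := M.win_honest η (M.ini n) h (List.replicate n .iota) (by
      intro l hl
      rw [List.eq_of_mem_replicate hl]; simp [Ls]) (by
      intro s; simp [ini]; ring)
    convert this using 2
    simp [start, stk]

end GVS
end

end BG


namespace BG

/-! ### A small programming language -/

/-- Loop programs with unbounded loops. -/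
inductive Prog : Type
  | skip : Prog
  | inc (r : ℕ) : Prog
  | seq (p q : Prog) : Prog
  | loop (r : ℕ) (p : Prog) : Prog

namespace Prog

/-- Injective code of a program. -/
def toNat : Prog → ℕ
  | skip => Nat.pair 0 0
  | inc r => Nat.pair 1 r
  | seq p q => Nat.pair 2 (Nat.pair p.toNat q.toNat)
  | loop r p => Nat.pair 3 (Nat.pair r p.toNat)

lemma toNat_inj : Function.Injective toNat := by
  intro p
  induction p with
  | skip => intro q h; cases q <;> simp_all [toNat]
  | inc r => intro q h; cases q <;> simp_all [toNat]
  | seq p q ihp ihq =>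
    intro t h
    cases t <;> simp [toNat] at h
    rw [ihp h.1, ihq h.2]
  | loop r p ih =>
    intro t h
    cases t <;> simp [toNat] at h
    rw [h.1, ih h.2]

instance : Countable Prog := toNat_inj.countable

end Prog

open Prog

/-- Configurations: a stack of programs and a register valuation. -/
abbrev Cfg : Type := List Prog × (ℕ → ℕ)

/-- One step. -/
def stp : Cfg → Option Cfg
  | ([], _) => none
  | (.skip :: K, s) => some (K, s)
  | (.inc r :: K, s) => some (K, Function.update s r (s r + 1))
  | (.seq p q :: K, s) => some (p :: q :: K, s)
  | (.loop r p :: K, s) =>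
    if s r = 0 then some (K, s)
    else some (p :: .loop r p :: K, Function.update s r (s r - 1))

/-- Predecessor relation. -/
def Rel (c' c : Cfg) : Prop := stp c = some c'

/-- Halting. -/
def Halts (c : Cfg) : Prop := Acc Rel c

lemma halts_of_step {c c' : Cfg} (h : Rel c' c) (h' : Halts c') : Halts c := by
  refine Acc.intro c fun d hd => ?_
  have : d = c' := by
    unfold Rel at h hd
    rw [h] at hd
    exact (Option.some.inj hd).symm
  rwa [this]

lemma exists_of_not_halts {c : Cfg} (h : ¬ Halts c) : ∃ c', stp c = some c' ∧ ¬ Halts c' := by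
  by_contra hc
  push Not at hc
  exact h (Acc.intro c fun d hd => hc d hd)

lemma halts_of_trans {c c' : Cfg} (h : Relation.TransGen Rel c' c) (h' : Halts c') : Halts c := by
  induction h with
  | single h => exact halts_of_step h h'
  | tail _ h ih => exact halts_of_step h ih

/-- Control points of a program. -/
def conts : Prog → List Prog → List (List Prog)
  | .skip, K => [.skip :: K]
  | .inc r, K => [.inc r :: K]
  | .seq p q, K => (.seq p q :: K) :: (conts p (q :: K) ++ conts q K)
  | .loop r p, K => (.loop r p :: K) :: conts p (.loop r p :: K)

lemma self_mem_conts (p : Prog) (K : List Prog) : p :: K ∈ conts p K := by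
  cases p <;> simp [conts]

lemma conts_step (p : Prog) (K : List Prog) (c c' : Cfg) (hc : c.1 ∈ conts p K)
    (h : stp c = some c') : c'.1 ∈ conts p K ∨ c'.1 = K := by
  induction p generalizing K with
  | skip =>
    simp [conts] at hc
    obtain ⟨c1, s⟩ := c
    simp only at hc
    subst hc
    simp [stp] at h
    simp [← h]
  | inc r =>
    simp [conts] at hc
    obtain ⟨c1, s⟩ := c
    simp only at hc
    subst hc
    simp [stp] at h
    simp [← h]
  | seq p q ihp ihq =>
    simp only [conts, List.mem_cons, List.mem_append] at hc ⊢
    rcases hc with hc | hc | hc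
    · obtain ⟨c1, s⟩ := c
      simp only at hc
      subst hc
      simp [stp] at h
      left; right; left
      rw [← h]
      exact self_mem_conts _ _
    · rcases ihp _ hc with h | h
      · tauto
      · rw [h]; left; right; right; exact self_mem_conts _ _
    · rcases ihq _ hc with h | h <;> tauto
  | loop r p ih =>
    simp only [conts, List.mem_cons] at hc ⊢
    rcases hc with hc | hc
    · obtain ⟨c1, s⟩ := c
      simp only at hc
      subst hc
      simp only [stp] at h
      split_ifs at h
      · right; simp at h; rw [← h]
      · left; right
        simp at h; rw [← h]
        exact self_mem_conts _ _
    · rcases ih _ hc with h | h <;> tauto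

/-- Variables of the vector system. -/
inductive Var : Type
  | pos (r : ℕ) : Var
  | neg (r : ℕ) : Var
  | ctl (K : List Prog) : Var

instance : Countable Var := by
  have h : Function.Injective (fun v : Var => match v with
      | .pos r => (Sum.inl r : ℕ ⊕ ℕ ⊕ List Prog)
      | .neg r => Sum.inr (Sum.inl r)
      | .ctl K => Sum.inr (Sum.inr K)) := by
    intro x y h
    cases x <;> cases y <;> simp_all
  exact h.countable

/-- Transitions: a control point and, for loops, whether the loop is left. -/
abbrev Trn : Type := List Prog × Bool

/-- Target control point. -/
def tgt : Trn → List Prog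
  | ([], _) => []
  | (.skip :: K, _) => K
  | (.inc _ :: K, _) => K
  | (.seq p q :: K, _) => p :: q :: K
  | (.loop _ _ :: K, true) => K
  | (.loop r p :: K, false) => p :: .loop r p :: K

/-- Register change. -/
def dlt : Trn → ℕ → ℤ
  | (.inc r :: _, _), r' => if r' = r then 1 else 0
  | (.loop r _ :: _, false), r' => if r' = r then -1 else 0
  | _, _ => 0

/-- Guards. -/
def grd : Trn → List (Option Var × ℤ)
  | ([], _) => [(none, 0)]
  | (.loop r p :: K, true) => [(some (.ctl (.loop r p :: K)), 0), (some (.pos r), -1)]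
  | (.loop r p :: K, false) => [(some (.ctl (.loop r p :: K)), 0), (some (.neg r), 0)]
  | (K, _) => [(some (.ctl K), 0)]

noncomputable section
open Classical

/-- Indicator of equality of control points. -/
def ind (K K' : List Prog) : ℤ := if K = K' then 1 else 0

/-- Weights. -/
def wgt (P : Prog) : Var → Ltr Trn → ℤ
  | .pos r, .tr t => dlt t r
  | .neg r, .tr t => - dlt t r
  | .ctl K, .tr t => ind K t.1 - ind K (tgt t)
  | .pos r, .iota => if r = 0 then 1 else 0
  | .neg r, .iota => - (if r = 0 then 1 else 0)
  | .ctl _, .iota => 0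
  | .ctl K, .bot => - ind K [P]
  | _, .bot => 0

/-- All control points. -/
def ctls (P : Prog) : List (List Prog) := [] :: conts P []

/-- Transitions in use. -/
def trns (P : Prog) : List Trn := (ctls P).flatMap fun K => [(K, false), (K, true)]

/-- The vector system of a program. -/
def sys (P : Prog) : GVS Trn Var where
  wt := wgt P
  guards := grd
  Ts := trns P
  Ss := (trns P).flatMap fun t => (grd t).filterMap Prod.fst
  hSs := by
    intro t ht p hp s hs
    exact List.mem_flatMap.2 ⟨t, ht, List.mem_filterMap.2 ⟨p, hp, hs⟩⟩

/-- Encoding of a configuration. -/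
def enc (c : Cfg) : Var → ℤ
  | .pos r => c.2 r
  | .neg r => - (c.2 r : ℤ)
  | .ctl K => - ind K c.1

lemma ctl_of_neg {K : List Prog} {c : Cfg} (h : enc c (.ctl K) + 0 < 0) : c.1 = K := by
  simp only [enc, ind] at h
  split_ifs at h with h'
  · exact h'.symm
  · omega

lemma next_enc (P : Prog) (K : List Prog) (b : Bool) (s s' : ℕ → ℕ)
    (h : ∀ r, (s' r : ℤ) = s r + dlt (K, b) r) :
    (sys P).next (enc (K, s)) (K, b) = enc (tgt (K, b), s') := by
  funext x
  cases x with
  | pos r => simp [GVS.next, sys, enc, wgt, h]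
  | neg r => simp [GVS.next, sys, enc, wgt, h]; ring
  | ctl K' => simp [GVS.next, sys, enc, wgt]; ring

lemma valid_step (P : Prog) (c : Cfg) (t : Trn) (h : (sys P).Valid (enc c) t) :
    ∃ c', stp c = some c' ∧ (sys P).next (enc c) t = enc c' := by
  obtain ⟨K, b⟩ := t
  obtain ⟨K', s⟩ := c
  match K, b with
  | [], _ => simp [GVS.Valid, sys, grd, GVS.vO] at h
  | .skip :: K, b =>
    have h1 := ctl_of_neg (h (some (.ctl (.skip :: K)), 0) (by simp [sys, grd]))
    simp only at h1
    subst h1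
    exact ⟨_, rfl, next_enc P _ _ _ _ (by intro r; simp [dlt])⟩
  | .inc r :: K, b =>
    have h1 := ctl_of_neg (h (some (.ctl (.inc r :: K)), 0) (by simp [sys, grd]))
    simp only at h1
    subst h1
    refine ⟨_, rfl, next_enc P _ _ _ _ ?_⟩
    intro r'
    by_cases hr : r' = r
    · subst hr; simp [dlt]
    · simp [dlt, hr]
  | .seq p q :: K, b =>
    have h1 := ctl_of_neg (h (some (.ctl (.seq p q :: K)), 0) (by simp [sys, grd]))
    simp only at h1
    subst h1
    exact ⟨_, rfl, next_enc P _ _ _ _ (by intro r; simp [dlt])⟩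
  | .loop r p :: K, true =>
    have h1 := ctl_of_neg (h (some (.ctl (.loop r p :: K)), 0) (by simp [sys, grd]))
    have h2 := h (some (.pos r), -1) (by simp [sys, grd])
    simp only [GVS.vO, enc] at h2
    simp only at h1
    subst h1
    have h3 : s r = 0 := by omega
    refine ⟨(K, s), by simp [stp, h3], next_enc P _ _ _ _ ?_⟩
    intro r'; simp [dlt]
  | .loop r p :: K, false =>
    have h1 := ctl_of_neg (h (some (.ctl (.loop r p :: K)), 0) (by simp [sys, grd]))
    have h2 := h (some (.neg r), 0) (by simp [sys, grd])
    simp only [GVS.vO, enc] at h2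
    simp only at h1
    subst h1
    have h3 : s r ≠ 0 := by omega
    refine ⟨(p :: .loop r p :: K, Function.update s r (s r - 1)), by simp [stp, h3],
      next_enc P _ _ _ _ ?_⟩
    intro r'
    by_cases hr : r' = r
    · subst hr; simp [dlt]; omega
    · simp [dlt, hr]

lemma step_valid (P : Prog) (c c' : Cfg) (h : stp c = some c') :
    ∃ b, (sys P).Valid (enc c) (c.1, b) := by
  obtain ⟨K, s⟩ := c
  match K with
  | [] => simp [stp] at h
  | .skip :: K => exact ⟨true, by simp [GVS.Valid, sys, grd, GVS.vO, enc, ind]⟩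
  | .inc r :: K => exact ⟨true, by simp [GVS.Valid, sys, grd, GVS.vO, enc, ind]⟩
  | .seq p q :: K => exact ⟨true, by simp [GVS.Valid, sys, grd, GVS.vO, enc, ind]⟩
  | .loop r p :: K =>
    by_cases hs : s r = 0
    · exact ⟨true, by simp [GVS.Valid, sys, grd, GVS.vO, enc, ind, hs]⟩
    · exact ⟨false, by simp [GVS.Valid, sys, grd, GVS.vO, enc, ind]; omega⟩

/-- Initial configuration. -/
def iniCfg (P : Prog) (n : ℕ) : Cfg := ([P], fun r => if r = 0 then n else 0)

lemma ini_eq (P : Prog) (n : ℕ) : (sys P).ini n = enc (iniCfg P n) := by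
  funext x
  cases x with
  | pos r => by_cases h : r = 0 <;> simp [GVS.ini, sys, enc, wgt, iniCfg, h]
  | neg r => by_cases h : r = 0 <;> simp [GVS.ini, sys, enc, wgt, iniCfg, h]
  | ctl K => simp [GVS.ini, sys, enc, wgt, iniCfg]

lemma term_of_halts (P : Prog) (c : Cfg) (h : Halts c) : (sys P).Term (enc c) := by
  induction h with
  | intro c _ ih =>
    refine GVS.Term.mk _ fun t _ hv => ?_
    obtain ⟨c', h1, h2⟩ := valid_step P c t hv
    rw [h2]
    exact ih c' h1

theorem sys_spec (P : Prog) (η : E (Gen Trn Var) →* B3) (hη : Function.Injective η) (n : ℕ) :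
    BG3AttackerWins ((sys P).AL.map η) ((sys P).DL.map η) (η (GVS.start n)) ↔
      Halts (iniCfg P n) := by
  constructor
  · intro h
    by_contra hn
    refine (sys P).defender η hη (fun v => ∃ c : Cfg, v = enc c ∧ c.1 ∈ ctls P ∧ ¬ Halts c)
      ?_ n ⟨iniCfg P n, ini_eq P n, ?_, hn⟩ h
    · rintro v ⟨c, rfl, hc, hh⟩
      obtain ⟨c', h1, h2⟩ := exists_of_not_halts hh
      obtain ⟨b, hb⟩ := step_valid P c c' h1
      obtain ⟨c'', h3, h4⟩ := valid_step P c _ hb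
      have : c'' = c' := by rw [h1] at h3; exact (Option.some.inj h3).symm
      subst this
      refine ⟨(c.1, b), ?_, hb, c'', h4, ?_, h2⟩
      · refine List.mem_flatMap.2 ⟨c.1, hc, ?_⟩
        cases b <;> simp
      · rcases List.mem_cons.1 hc with hc | hc
        · obtain ⟨K, s⟩ := c
          simp only at hc
          subst hc
          simp [stp] at h1
        · rcases conts_step P [] c c'' hc h1 with h | h
          · exact List.mem_cons_of_mem _ h
          · rw [h]; exact List.mem_cons_self
    · exact List.mem_cons_of_mem _ (self_mem_conts P [])
  · intro h
    apply (sys P).attacker η n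
    rw [ini_eq]
    exact term_of_halts P _ h

end

end BG

namespace BG

/-! ### Compiling primitive recursive functions -/

/-- Program `p` takes state `s` to state `s'`. -/
def Ev (p : Prog) (s s' : ℕ → ℕ) : Prop := ∀ K, Relation.TransGen Rel (K, s') (p :: K, s)

lemma ev_skip (s : ℕ → ℕ) : Ev .skip s s := fun _ => .single rfl

lemma ev_inc (r : ℕ) (s : ℕ → ℕ) : Ev (.inc r) s (Function.update s r (s r + 1)) :=
  fun _ => .single rfl

lemma ev_seq {p q : Prog} {s s1 s2 : ℕ → ℕ} (h1 : Ev p s s1) (h2 : Ev q s1 s2) :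
    Ev (.seq p q) s s2 := fun K =>
  ((h2 K).trans (h1 (q :: K))).tail rfl

lemma ev_loop_zero {r : ℕ} {p : Prog} {s : ℕ → ℕ} (h : s r = 0) : Ev (.loop r p) s s :=
  fun K => .single (by simp [Rel, stp, h])

lemma loop_step {r : ℕ} {p : Prog} {s s1 : ℕ → ℕ} (h : s r ≠ 0)
    (h1 : Ev p (Function.update s r (s r - 1)) s1) (K : List Prog) :
    Relation.TransGen Rel (.loop r p :: K, s1) (.loop r p :: K, s) :=
  (h1 (.loop r p :: K)).tail (by simp [Rel, stp, h])

lemma ev_loop_succ {r : ℕ} {p : Prog} {s s1 s2 : ℕ → ℕ} (h : s r ≠ 0)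
    (h1 : Ev p (Function.update s r (s r - 1)) s1) (h2 : Ev (.loop r p) s1 s2) :
    Ev (.loop r p) s s2 := fun K => (h2 K).trans (loop_step h h1 K)

/-- Loop rule with an invariant. -/
lemma ev_loop {r : ℕ} {p : Prog} (I : ℕ → (ℕ → ℕ) → Prop)
    (hb : ∀ i s, I (i + 1) s → s r = i + 1 →
      ∃ s', Ev p (Function.update s r i) s' ∧ I i s' ∧ s' r = i) :
    ∀ k s, I k s → s r = k → ∃ s', Ev (.loop r p) s s' ∧ I 0 s' ∧ s' r = 0 := by
  intro k
  induction k with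
  | zero => intro s h1 h2; exact ⟨s, ev_loop_zero h2, h1, h2⟩
  | succ k ih =>
    intro s h1 h2
    obtain ⟨s1, h3, h4, h5⟩ := hb k s h1 h2
    obtain ⟨s2, h6, h7, h8⟩ := ih s1 h4 h5
    refine ⟨s2, ev_loop_succ (by omega) ?_ h6, h7, h8⟩
    rwa [h2, Nat.add_sub_cancel]

/-- Set a register to zero. -/
def clr (r : ℕ) : Prog := .loop r .skip

lemma ev_clr (r : ℕ) (s : ℕ → ℕ) : ∃ s', Ev (clr r) s s' ∧ s' r = 0 ∧ ∀ x, x ≠ r → s' x = s x := by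
  obtain ⟨s', h1, h2, h3⟩ := ev_loop (r := r) (p := .skip) (fun _ t => ∀ x, x ≠ r → t x = s x)
    (by
      intro i t ht _
      exact ⟨_, ev_skip _, fun x hx => by simp [hx, ht x hx], by simp⟩) (s r) s (fun _ _ => rfl) rfl
  exact ⟨s', h1, h3, h2⟩

/-- Add one register to another, destroying the first. -/
def mov (a b : ℕ) : Prog := .loop a (.inc b)

lemma ev_mov {a b : ℕ} (hab : a ≠ b) (s : ℕ → ℕ) :
    ∃ s', Ev (mov a b) s s' ∧ s' a = 0 ∧ s' b = s b + s a ∧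
      ∀ x, x ≠ a → x ≠ b → s' x = s x := by
  obtain ⟨s', h1, h2, h3⟩ := ev_loop (r := a) (p := .inc b)
    (fun i t => t b + i = s b + s a ∧ ∀ x, x ≠ a → x ≠ b → t x = s x)
    (by
      rintro i t ⟨h1, h2⟩ h3
      refine ⟨_, ev_inc _ _, ⟨?_, ?_⟩, ?_⟩
      · simp [hab.symm]; omega
      · intro x hx hx'; simp [hx, hx', h2 x hx hx']
      · simp [hab]) (s a) s ⟨rfl, fun _ _ _ => rfl⟩ rfl
  exact ⟨s', h1, h3, by omega, h2.2⟩

/-- Add one register to two others, destroying the first. -/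
def mov2 (a b c : ℕ) : Prog := .loop a (.seq (.inc b) (.inc c))

lemma ev_mov2 {a b c : ℕ} (hab : a ≠ b) (hac : a ≠ c) (hbc : b ≠ c) (s : ℕ → ℕ) :
    ∃ s', Ev (mov2 a b c) s s' ∧ s' a = 0 ∧ s' b = s b + s a ∧ s' c = s c + s a ∧
      ∀ x, x ≠ a → x ≠ b → x ≠ c → s' x = s x := by
  obtain ⟨s', h1, h2, h3⟩ := ev_loop (r := a) (p := .seq (.inc b) (.inc c))
    (fun i t => t b + i = s b + s a ∧ t c + i = s c + s a ∧
      ∀ x, x ≠ a → x ≠ b → x ≠ c → t x = s x)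
    (by
      rintro i t ⟨h1, h1', h2⟩ h3
      refine ⟨_, ev_seq (ev_inc _ _) (ev_inc _ _), ⟨?_, ?_, ?_⟩, ?_⟩
      · simp [hab.symm, hbc]; omega
      · simp [hac.symm, hbc.symm]; omega
      · intro x hx hx' hx''; simp [hx, hx', hx'', h2 x hx hx' hx'']
      · simp [hab, hac]) (s a) s ⟨rfl, rfl, fun _ _ _ _ => rfl⟩ rfl
  exact ⟨s', h1, h3, by omega, by omega, h2.2.2⟩

/-- Copy register `a` to `b` using `t`. -/
def cpy (a b t : ℕ) : Prog := .seq (clr b) (.seq (clr t) (.seq (mov2 a b t) (mov t a)))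

lemma ev_cpy {a b t : ℕ} (hab : a ≠ b) (hat : a ≠ t) (hbt : b ≠ t) (s : ℕ → ℕ) :
    ∃ s', Ev (cpy a b t) s s' ∧ s' b = s a ∧ ∀ x, x ≠ b → x ≠ t → s' x = s x := by
  obtain ⟨s1, e1, b1, c1⟩ := ev_clr b s
  obtain ⟨s2, e2, b2, c2⟩ := ev_clr t s1
  obtain ⟨s3, e3, a3, b3, t3, c3⟩ := ev_mov2 hab hat hbt s2
  obtain ⟨s4, e4, a4, b4, c4⟩ := ev_mov hat.symm s3
  refine ⟨s4, ev_seq e1 (ev_seq e2 (ev_seq e3 e4)), ?_, ?_⟩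
  · rw [c4 b hbt hab.symm, b3, c2 b hbt, b1, c2 a hat, c1 a hab]; omega
  · intro x hxb hxt
    by_cases hxa : x = a
    · subst hxa
      rw [b4, a3, t3, b2, c2 x hxt, c1 x hxb]; omega
    · rw [c4 x hxt hxa, c3 x hxa hxb hxt, c2 x hxt, c1 x hxb]

/-- `p` computes `f` from the registers `args` to the register `out`, keeping the other
registers below `m`. -/
def Computes {n : ℕ} (p : Prog) (m : ℕ) (args : Fin n → ℕ) (out : ℕ)
    (f : List.Vector ℕ n → ℕ) : Prop :=
  ∀ s : ℕ → ℕ, ∃ s', Ev p s s' ∧ s' out = f (List.Vector.ofFn fun i => s (args i)) ∧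
    ∀ x, x < m → x ≠ out → s' x = s x

theorem compile {n : ℕ} {f : List.Vector ℕ n → ℕ} (hf : Nat.Primrec' f) :
    ∀ (m : ℕ) (args : Fin n → ℕ) (out : ℕ), (∀ i, args i < m) → out < m →
      (∀ i, args i ≠ out) → ∃ p, Computes p m args out f := by
  induction hf with
  | zero =>
    intro m args out _ _ _
    refine ⟨clr out, fun s => ?_⟩
    obtain ⟨s', h1, h2, h3⟩ := ev_clr out s
    exact ⟨s', h1, h2, fun x _ hx => h3 x hx⟩
  | succ =>
    intro m args out ha ho hne
    refine ⟨.seq (cpy (args 0) out m) (.inc out), fun s => ?_⟩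
    obtain ⟨s', h1, h2, h3⟩ := ev_cpy (hne 0) (ha 0).ne ho.ne s
    refine ⟨_, ev_seq h1 (ev_inc _ _), ?_, ?_⟩
    · simp [h2]
    · intro x hx hxo
      simp [hxo, h3 x hxo hx.ne]
  | get i =>
    intro m args out ha ho hne
    refine ⟨cpy (args i) out m, fun s => ?_⟩
    obtain ⟨s', h1, h2, h3⟩ := ev_cpy (hne i) (ha i).ne ho.ne s
    refine ⟨_, h1, ?_, ?_⟩
    · simp [h2]
    · intro x hx hxo
      exact h3 x hxo hx.ne
  | @comp k n f g _ _ ihf ihg =>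
    intro m args out ha ho hne
    have key : ∀ j, j ≤ n → ∃ p, ∀ s : ℕ → ℕ, ∃ s', Ev p s s' ∧
        (∀ i : Fin n, i.1 < j → s' (m + i) = g i (List.Vector.ofFn fun i => s (args i))) ∧
        ∀ x, x < m → s' x = s x := by
      intro j
      induction j with
      | zero =>
        intro _
        exact ⟨.skip, fun s => ⟨s, ev_skip s, fun i hi => absurd hi (by omega), fun _ _ => rfl⟩⟩
      | succ j ih =>
        intro hj
        obtain ⟨p, hp⟩ := ih (by omega)
        obtain ⟨q, hq⟩ := ihg ⟨j, hj⟩ (m + j + 1) args (m + j)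
          (fun i => by have := ha i; omega) (by omega) (fun i => by have := ha i; omega)
        refine ⟨.seq p q, fun s => ?_⟩
        obtain ⟨s1, e1, b1, c1⟩ := hp s
        obtain ⟨s2, e2, b2, c2⟩ := hq s1
        have e : (fun i => s1 (args i)) = fun i => s (args i) := funext fun i => c1 _ (ha i)
        rw [e] at b2
        refine ⟨s2, ev_seq e1 e2, ?_, ?_⟩
        · intro i hi
          rcases Nat.lt_succ_iff_lt_or_eq.1 hi with h | h
          · rw [c2 _ (by omega) (by omega), b1 i h]
          · have : i = ⟨j, hj⟩ := Fin.ext h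
            subst this
            exact b2
        · intro x hx
          rw [c2 x (by omega) (by omega), c1 x hx]
    obtain ⟨p, hp⟩ := key n le_rfl
    obtain ⟨q, hq⟩ := ihf (m + n) (fun i => m + i) out (fun i => by have := i.2; omega)
      (by omega) (fun i => by omega)
    refine ⟨.seq p q, fun s => ?_⟩
    obtain ⟨s1, e1, b1, c1⟩ := hp s
    obtain ⟨s2, e2, b2, c2⟩ := hq s1
    refine ⟨s2, ev_seq e1 e2, ?_, ?_⟩
    · rw [b2]
      congr 2
      funext i
      exact b1 i i.2
    · intro x hx hxo
      rw [c2 x (by omega) hxo, c1 x hx]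
  | @prec n f g _ _ ihf ihg =>
    intro m args out ha ho hne
    obtain ⟨p, hp⟩ := ihf (m + 3) (fun i => args i.succ) (m + 2)
      (fun i => by have := ha i.succ; omega) (by omega) (fun i => by have := ha i.succ; omega)
    obtain ⟨q, hq⟩ := ihg (m + 4)
      (Fin.cons (m + 1) (Fin.cons (m + 2) fun i => args i.succ)) (m + 3)
      (by
        intro i
        refine Fin.cases ?_ (fun i => ?_) i
        · simp
        · refine Fin.cases ?_ (fun i => ?_) i
          · simp
          · have := ha i.succ; simp; omega) (by omega)
      (by
        intro i
        refine Fin.cases ?_ (fun i => ?_) i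
        · simp
        · refine Fin.cases ?_ (fun i => ?_) i
          · simp
          · have := ha i.succ; simp; omega)
    refine ⟨.seq (cpy (args 0) m (m + 3)) (.seq (clr (m + 1)) (.seq p (.seq
      (.loop m (.seq q (.seq (cpy (m + 3) (m + 2) (m + 4)) (.inc (m + 1)))))
      (cpy (m + 2) out (m + 4))))), fun s => ?_⟩
    have h0 := ha 0
    obtain ⟨s1, e1, b1, c1⟩ := ev_cpy (a := args 0) (b := m) (t := m + 3)
      (by omega) (by omega) (by omega) s
    obtain ⟨s2, e2, b2, c2⟩ := ev_clr (m + 1) s1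
    obtain ⟨s3, e3, b3, c3⟩ := hp s2
    have hlow : ∀ x, x < m → s3 x = s x := fun x hx => by
      rw [c3 x (by omega) (by omega), c2 x (by omega), c1 x (by omega) (by omega)]
    set tl := List.Vector.ofFn fun i : Fin n => s (args i.succ) with htl
    have e : (fun i : Fin n => s2 (args i.succ)) = fun i => s (args i.succ) := funext fun i => by
      have := ha i.succ
      rw [c2 _ (by omega), c1 _ (by omega) (by omega)]
    rw [e, ← htl] at b3
    let R : ℕ → ℕ := fun y => Nat.rec (f tl) (fun y IH => g (y ::ᵥ IH ::ᵥ tl)) y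
    obtain ⟨s4, e4, ⟨i4, j4, k4⟩, z4⟩ := ev_loop (r := m)
      (p := .seq q (.seq (cpy (m + 3) (m + 2) (m + 4)) (.inc (m + 1))))
      (fun i t => t (m + 1) + i = s (args 0) ∧ t (m + 2) = R (t (m + 1)) ∧ ∀ x, x < m → t x = s x)
      (by
        rintro i t ⟨t1, t2, t3⟩ t4
        obtain ⟨u1, f1, v1, w1⟩ := hq (Function.update t m i)
        obtain ⟨u2, f2, v2, w2⟩ := ev_cpy (a := m + 3) (b := m + 2) (t := m + 4)
          (by omega) (by omega) (by omega) u1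
        have hv : u1 (m + 3) = R (t (m + 1) + 1) := by
          rw [v1]
          have h1 : (List.Vector.ofFn fun i_1 : Fin (n + 2) => Function.update t m i
              ((Fin.cons (m + 1) (Fin.cons (m + 2) fun i => args i.succ) : Fin (n + 2) → ℕ) i_1))
              = t (m + 1) ::ᵥ t (m + 2) ::ᵥ tl := by
            have h2 : (fun i_1 : Fin n => Function.update t m i (args i_1.succ))
                = fun i => s (args i.succ) := funext fun i => by
              have := ha i.succ
              rw [Function.update_of_ne (by omega), t3 _ this]
            rw [htl, ← h2]
            simp [List.Vector.ofFn]
          rw [h1, t2]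
        refine ⟨_, ev_seq f1 (ev_seq f2 (ev_inc _ _)), ⟨?_, ?_, ?_⟩, ?_⟩
        · rw [Function.update_self, w2 _ (by omega) (by omega), w1 _ (by omega) (by omega),
            Function.update_of_ne (by omega)]
          omega
        · rw [Function.update_self, Function.update_of_ne (by omega), v2, hv,
            w2 _ (by omega) (by omega), w1 _ (by omega) (by omega),
            Function.update_of_ne (by omega)]
        · intro x hx
          rw [Function.update_of_ne (by omega), w2 _ (by omega) (by omega),
            w1 _ (by omega) (by omega), Function.update_of_ne (by omega), t3 x hx]
        · rw [Function.update_of_ne (by omega), w2 _ (by omega) (by omega),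
            w1 _ (by omega) (by omega), Function.update_self]) (s (args 0)) s3
      ⟨by rw [c3 _ (by omega) (by omega), b2]; omega, by
        rw [b3, c3 _ (by omega) (by omega), b2]
        exact rfl, hlow⟩
      (by rw [c3 _ (by omega) (by omega), c2 _ (by omega), b1])
    obtain ⟨s5, e5, b5, c5⟩ := ev_cpy (a := m + 2) (b := out) (t := m + 4)
      (by omega) (by omega) (by omega) s4
    refine ⟨s5, ev_seq e1 (ev_seq e2 (ev_seq e3 (ev_seq e4 e5))), ?_, ?_⟩
    · rw [b5, j4]
      have : s4 (m + 1) = s (args 0) := by omega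
      rw [this]
      simp [R, htl, List.Vector.tail_ofFn]
    · intro x hx hxo
      rw [c5 x hxo (by omega), k4 x hx]

/-- The search program: halts on `n` iff `g n k = 0` for some `k`. -/
theorem search (g : ℕ → ℕ → ℕ) (hg : Primrec₂ g) (hg1 : ∀ n k, g n k ≤ 1) :
    ∃ P : Prog, ∀ n, Halts (iniCfg P n) ↔ ∃ k, g n k = 0 := by
  obtain ⟨G, hG⟩ := compile (Nat.Primrec'.prim_iff₂.2 hg) 4
    (fun i : Fin 2 => i.1) 3
    (fun i => by have := i.2; omega) (by omega) (fun i => by have := i.2; omega)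
  set B : Prog := .seq G (.seq (mov 3 2) (.inc 1)) with hB
  have body : ∀ s : ℕ → ℕ, s 2 = 1 → ∃ s', Ev B (Function.update s 2 (s 2 - 1)) s' ∧
      s' 0 = s 0 ∧ s' 1 = s 1 + 1 ∧ s' 2 = g (s 0) (s 1) := by
    intro s hs
    obtain ⟨s1, e1, b1, c1⟩ := hG (Function.update s 2 (s 2 - 1))
    obtain ⟨s2, e2, a2, b2, c2⟩ := ev_mov (a := 3) (b := 2) (by omega) s1
    refine ⟨_, ev_seq e1 (ev_seq e2 (ev_inc _ _)), ?_, ?_, ?_⟩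
    · rw [Function.update_of_ne (by omega), c2 0 (by omega) (by omega), c1 0 (by omega) (by omega),
        Function.update_of_ne (by omega)]
    · rw [Function.update_self, c2 1 (by omega) (by omega), c1 1 (by omega) (by omega),
        Function.update_of_ne (by omega)]
    · rw [Function.update_of_ne (by omega), b2, c1 2 (by omega) (by omega), Function.update_self,
        b1, hs]
      simp [List.Vector.ofFn]
  have hinit : ∀ n, Relation.TransGen Rel
      ([.loop 2 B], Function.update (iniCfg (.seq (.inc 2) (.loop 2 B)) n).2 2
        ((iniCfg (.seq (.inc 2) (.loop 2 B)) n).2 2 + 1))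
      (iniCfg (.seq (.inc 2) (.loop 2 B)) n) := fun n => (ev_inc 2 _ [.loop 2 B]).tail rfl
  refine ⟨.seq (.inc 2) (.loop 2 B), fun n => ⟨fun h => ?_, ?_⟩⟩
  · by_contra hk
    push Not at hk
    have h1 : ∀ k, g n k = 1 := fun k => by have := hg1 n k; have := hk k; omega
    have hacc := Acc.transGen h
    have key : ∀ c, Acc (Relation.TransGen Rel) c →
        ¬ ∃ s : ℕ → ℕ, c = ([.loop 2 B], s) ∧ s 0 = n ∧ s 2 = 1 := by
      intro c hc
      induction hc with
      | intro c _ ih =>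
        rintro ⟨s, rfl, h0, h2⟩
        obtain ⟨s', hs, e0, e1, e2⟩ := body s h2
        refine ih _ (loop_step (by omega) hs []) ⟨s', rfl, by omega, ?_⟩
        rw [e2, h0, h1]
    refine key _ (hacc.inv (hinit n)) ⟨_, rfl, by simp [iniCfg], by simp [iniCfg]⟩
  · rintro ⟨k, hk⟩
    refine halts_of_trans (hinit n) ?_
    have key : ∀ j (s : ℕ → ℕ), s 0 = n → s 1 + j = k → (s 2 = 1 ∨ s 2 = 0) →
        Halts ([.loop 2 B], s) := by
      have zero : ∀ s : ℕ → ℕ, s 2 = 0 → Halts ([.loop 2 B], s) := by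
        intro s hs
        refine halts_of_trans (ev_loop_zero hs []) (Acc.intro _ fun c hc => ?_)
        simp [Rel, stp] at hc
      intro j
      induction j with
      | zero =>
        intro s h0 h1 h2
        rcases h2 with h2 | h2
        · obtain ⟨s', hs, e0, e1, e2⟩ := body s h2
          refine halts_of_trans (loop_step (by omega) hs []) (zero s' ?_)
          rw [e2, h0, ← hk, ← h1, add_zero]
        · exact zero s h2
      | succ j ih =>
        intro s h0 h1 h2
        rcases h2 with h2 | h2
        · obtain ⟨s', hs, e0, e1, e2⟩ := body s h2
          refine halts_of_trans (loop_step (by omega) hs []) (ih s' (by omega) (by omega) ?_)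
          have := hg1 (s 0) (s 1)
          omega
        · exact zero s h2
    exact key k _ (by simp [iniCfg]) (by simp [iniCfg]) (by simp [iniCfg])

open Nat.Partrec in
theorem exists_prog : ∃ P : Prog, ∀ c : Code,
    Halts (iniCfg P (Encodable.encode c)) ↔ (c.eval 0).Dom := by
  have hp : Primrec₂ (fun n k : ℕ =>
      Option.casesOn (Code.evaln k (Denumerable.ofNat Code n) 0) 1 (fun _ => 0) : ℕ → ℕ → ℕ) := by
    have h1 : Primrec (fun p : ℕ × ℕ => Code.evaln p.2 (Denumerable.ofNat Code p.1) 0) :=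
      Code.primrec_evaln.comp (Primrec.pair (Primrec.pair Primrec.snd
        ((Primrec.ofNat Code).comp Primrec.fst)) (Primrec.const 0))
    exact Primrec.option_casesOn h1 (Primrec.const 1) (Primrec.const 0).to₂
  obtain ⟨P, hP⟩ := search _ hp (by
    intro n k
    cases (Code.evaln k (Denumerable.ofNat Code n) 0) <;> simp)
  refine ⟨P, fun c => ?_⟩
  rw [hP]
  simp only [Denumerable.ofNat_encode]
  constructor
  · rintro ⟨k, hk⟩
    cases h : Code.evaln k c 0 with
    | none => rw [h] at hk; simp at hk
    | some x =>
      exact Part.dom_iff_mem.2 ⟨x, Code.evaln_complete.2 ⟨k, by rw [h]; simp⟩⟩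
  · intro h
    obtain ⟨x, hx⟩ := Part.dom_iff_mem.1 h
    obtain ⟨k, hk⟩ := Code.evaln_complete.1 hx
    refine ⟨k, ?_⟩
    rw [Option.mem_def] at hk
    rw [hk]

end BG

namespace BG

open Nat.Partrec in
theorem undecidable_aux :
    ¬ ComputablePred (fun inst : BG3Instance =>
      braid3 inst.2.2 ≠ 1 ∧
      BG3AttackerWins (inst.1.map braid3) (inst.2.1.map braid3) (braid3 inst.2.2)) := by
  intro hcomp
  obtain ⟨P, hP⟩ := exists_prog
  have := countable_gen Trn Var
  obtain ⟨η, hη⟩ := exists_embedding (Gen Trn Var)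
  choose wd hwd using exists_word
  have hmap : ∀ L : List B3, (L.map wd).map braid3 = L := by
    intro L
    simp [Function.comp_def, hwd]
  let wb := wd (η (gn (.ltr .bot)))
  let wi := wd (η (gn (.ltr .iota)))
  let wh := wd (η (gn .hon))
  let pw : ℕ → BraidWord3 := fun n => Nat.rec wb (fun _ w => w ++ wi) n
  have hpw : ∀ n, braid3 (pw n ++ wh) = η (GVS.start n) := by
    intro n
    have h1 : ∀ n, braid3 (pw n) = η (gn (.ltr .bot)) * η (gn (.ltr .iota)) ^ n := by
      intro n
      induction n with
      | zero => simp [pw, wb, hwd]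
      | succ n ih =>
        have : pw (n + 1) = pw n ++ wi := rfl
        rw [this, braid3_append, ih, pow_succ, mul_assoc, hwd]
    rw [braid3_append, h1, GVS.start, map_mul, map_mul, map_pow, hwd]
  have hprim : Primrec pw :=
    Primrec.nat_rec₁ wb (Primrec.list_append.comp Primrec.snd (Primrec.const wi)).to₂
  let F : Code → BG3Instance := fun c =>
    (((sys P).AL.map η).map wd, ((sys P).DL.map η).map wd, pw (Encodable.encode c) ++ wh)
  have hF : Primrec F :=
    Primrec.pair (Primrec.const _) (Primrec.pair (Primrec.const _)
      (Primrec.list_append.comp (hprim.comp Primrec.encode) (Primrec.const wh)))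
  refine ComputablePred.halting_problem 0 (ComputablePred.computable_of_manyOneReducible
    ⟨F, hF.to_comp, fun c => ?_⟩ hcomp)
  simp only [F, hmap, hpw]
  rw [sys_spec P η hη, hP]
  constructor
  · intro h
    refine ⟨fun h1 => ?_, h⟩
    exact GVS.Honest.ne_one (sys P) ((sys P).honest_start (Encodable.encode c))
      (hη (by rw [h1, map_one]))
  · exact fun h => h.2

end BG

/-- It is undecidable whether Attacker has a winning strategy in the Braid Game on `B₃`
starting from a non-trivial braid. -/
theorem braid_game_B3_undecidable :
    ¬ ComputablePred (fun inst : BG3Instance =>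
      braid3 inst.2.2 ≠ 1 ∧
      BG3AttackerWins (inst.1.map braid3) (inst.2.1.map braid3) (braid3 inst.2.2)) := by
  exact BG.undecidable_aux
end

section
/- Let U = {u₁, …, u_k} and V = {v₁, …, v_ℓ} be finite subsets of ℤ^n, and x, y ∈ ℤ^n. For w ∈ ℤ^n let M_w ∈ ℤ^{2n×2n} be the block matrix with the n×n identity matrix in the top-left and bottom-right blocks, the diagonal matrix diag(w₁, …, w_n) in the top-right block, and the zero matrix in the bottom-left block. Then Attacker has a winning strategy in the Robot Game with Attacker set U, Defender set V, initial vector x and target vector y if and only if Attacker has a winning strategy in the Matrix Game of dimension 2n with Attacker matrices {M_u : u ∈ U}, Defender matrices {M_v : v ∈ V}, initial vector (x₁, …, x_n, 1, …, 1)ᵀ and target vector (y₁, …, y_n, 1, …, 1)ᵀ. -/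
/-- The configuration (a vector in `ℤ^n`) after `k` rounds of the Robot Game, starting from
`x`, when Defender plays the sequence of vectors `δ` and Attacker follows the strategy `st`
(a function of the finite history of Defender's choices so far): in each round Defender's
vector is added first, then Attacker's. -/
def robotPos {n : ℕ} (x : Fin n → ℤ) (δ : ℕ → Fin n → ℤ)
    (st : List (Fin n → ℤ) → Fin n → ℤ) : ℕ → Fin n → ℤ
  | 0 => x
  | k + 1 => robotPos x δ st k + δ k + st ((List.range (k + 1)).map δ)

/-- Attacker has a winning strategy in the Robot Game with Attacker's vector set `U`,
Defender's vector set `V`, initial vector `x` and target vector `y`. -/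
def RobotAttackerWins {n : ℕ} (U V : Set (Fin n → ℤ)) (x y : Fin n → ℤ) : Prop :=
  ∃ st : List (Fin n → ℤ) → Fin n → ℤ,
    (∀ hist, (∀ v ∈ hist, v ∈ V) → st hist ∈ U) ∧
    ∀ δ : ℕ → Fin n → ℤ, (∀ i, δ i ∈ V) → ∃ m, robotPos x δ st (m + 1) = y

/-- The configuration (a vector in `ℤ^ι`) after `k` rounds of the Matrix Game, starting
from `x`, when Defender plays the sequence of matrices `δ` and Attacker follows the
strategy `st`: in each round Defender's matrix is applied first, then Attacker's. -/
def matrixPos {ι : Type*} [Fintype ι] (x : ι → ℤ) (δ : ℕ → Matrix ι ι ℤ)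
    (st : List (Matrix ι ι ℤ) → Matrix ι ι ℤ) : ℕ → ι → ℤ
  | 0 => x
  | k + 1 =>
    (st ((List.range (k + 1)).map δ)).mulVec ((δ k).mulVec (matrixPos x δ st k))

/-- Attacker has a winning strategy in the Matrix Game with Attacker's matrix set `MA`,
Defender's matrix set `MD`, initial vector `x` and target vector `y`. -/
def MatrixAttackerWins {ι : Type*} [Fintype ι] (MA MD : Set (Matrix ι ι ℤ))
    (x y : ι → ℤ) : Prop :=
  ∃ st : List (Matrix ι ι ℤ) → Matrix ι ι ℤ,
    (∀ hist, (∀ M ∈ hist, M ∈ MD) → st hist ∈ MA) ∧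
    ∀ δ : ℕ → Matrix ι ι ℤ, (∀ i, δ i ∈ MD) → ∃ m, matrixPos x δ st (m + 1) = y

/-- The block matrix `M_w ∈ ℤ^{2n×2n}` with identity blocks on the diagonal, `diag(w)` in
the top-right block and zero in the bottom-left block. -/
def blockOf {n : ℕ} (w : Fin n → ℤ) : Matrix (Fin n ⊕ Fin n) (Fin n ⊕ Fin n) ℤ :=
  Matrix.fromBlocks 1 (Matrix.diagonal w) 0 1

/-- Reads the vector `w` back from `M_w`. -/
def unblockOf {n : ℕ} (M : Matrix (Fin n ⊕ Fin n) (Fin n ⊕ Fin n) ℤ) : Fin n → ℤ :=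
  fun i => M (Sum.inl i) (Sum.inr i)

theorem unblockOf_blockOf {n : ℕ} (w : Fin n → ℤ) : unblockOf (blockOf w) = w := by
  funext i
  simp [unblockOf, blockOf]

theorem blockOf_mulVec {n : ℕ} (w a : Fin n → ℤ) :
    (blockOf w).mulVec (Sum.elim a 1) = Sum.elim (a + w) 1 := by
  rw [blockOf, Matrix.fromBlocks_mulVec]
  funext i
  rcases i with i | i <;> simp [Matrix.mulVec_diagonal]

theorem matrixPos_eq {n : ℕ} (x : Fin n → ℤ) (δ : ℕ → Fin n → ℤ)
    (st : List (Fin n → ℤ) → Fin n → ℤ)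
    (δ' : ℕ → Matrix (Fin n ⊕ Fin n) (Fin n ⊕ Fin n) ℤ)
    (st' : List (Matrix (Fin n ⊕ Fin n) (Fin n ⊕ Fin n) ℤ) →
      Matrix (Fin n ⊕ Fin n) (Fin n ⊕ Fin n) ℤ)
    (hδ : ∀ k, δ' k = blockOf (δ k))
    (hst : ∀ k, st' ((List.range k).map δ') = blockOf (st ((List.range k).map δ))) (k : ℕ) :
    matrixPos (Sum.elim x 1) δ' st' k = Sum.elim (robotPos x δ st k) 1 := by
  induction k with
  | zero => rfl
  | succ k ih => rw [matrixPos, robotPos, ih, hst, hδ, blockOf_mulVec, blockOf_mulVec]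

/-- Attacker has a winning strategy in the Robot Game with sets `U, V`, initial vector `x`
and target vector `y` iff Attacker has a winning strategy in the Matrix Game of dimension
`2n` with matrices `{M_u : u ∈ U}` and `{M_v : v ∈ V}`, initial vector `(x, 1, …, 1)ᵀ` and
target vector `(y, 1, …, 1)ᵀ`. -/
theorem robot_game_iff_matrix_game {n : ℕ} (U V : Finset (Fin n → ℤ))
    (x y : Fin n → ℤ) :
    RobotAttackerWins (↑U) (↑V) x y ↔
      MatrixAttackerWins
        {M | ∃ u ∈ U, M = blockOf u}
        {M | ∃ v ∈ V, M = blockOf v}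
        (Sum.elim x 1) (Sum.elim y 1) := by
  constructor
  · rintro ⟨st, hU, hwin⟩
    refine ⟨fun hist => blockOf (st (hist.map unblockOf)), ?_, ?_⟩
    · intro hist hh
      refine ⟨_, hU _ ?_, rfl⟩
      intro v hv
      obtain ⟨M, hM, rfl⟩ := List.mem_map.1 hv
      obtain ⟨w, hw, rfl⟩ := hh M hM
      rw [unblockOf_blockOf]
      exact hw
    · intro δ' hδ'
      choose δ hδ hδeq using hδ'
      obtain ⟨m, hm⟩ := hwin δ hδ
      refine ⟨m, ?_⟩
      rw [matrixPos_eq x δ st δ' _ hδeq, hm]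
      intro k
      have : unblockOf ∘ δ' = δ := by
        funext i
        rw [Function.comp, hδeq, unblockOf_blockOf]
      simp only [List.map_map, this]
  · rintro ⟨st', hU, hwin⟩
    have key : ∀ hist : List (Fin n → ℤ), (∀ v ∈ hist, v ∈ V) →
        ∃ u ∈ U, st' (hist.map blockOf) = blockOf u := by
      intro hist hh
      refine hU _ ?_
      intro M hM
      obtain ⟨v, hv, rfl⟩ := List.mem_map.1 hM
      exact ⟨v, hh v hv, rfl⟩
    refine ⟨fun hist => unblockOf (st' (hist.map blockOf)), ?_, ?_⟩
    · intro hist hh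
      obtain ⟨u, hu, he⟩ := key hist hh
      simp only [he, unblockOf_blockOf]
      exact hu
    · intro δ hδ
      obtain ⟨m, hm⟩ := hwin (fun i => blockOf (δ i)) (fun i => ⟨δ i, hδ i, rfl⟩)
      refine ⟨m, ?_⟩
      rw [matrixPos_eq x δ (fun hist => unblockOf (st' (hist.map blockOf))) _ st'
        (fun _ => rfl)] at hm
      · funext i
        exact congrFun hm (Sum.inl i)
      · intro k
        obtain ⟨u, hu, he⟩ := key ((List.range k).map δ) (by
          intro v hv
          obtain ⟨i, _, rfl⟩ := List.mem_map.1 hv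
          exact hδ i)
        simp only [he, unblockOf_blockOf]
        rw [← he, List.map_map]
        rfl
end

section
/- The group homomorphism f from the free group F₂ on two generators c, d to SL(2, ℤ) determined by f(c) = [[1, 2], [0, 1]] and f(d) = [[1, 0], [2, 1]] is injective (a monomorphism). -/
/-- The matrix `[[1, 2], [0, 1]]` as an element of `SL(2, ℤ)`. -/
def cMat : Matrix.SpecialLinearGroup (Fin 2) ℤ :=
  ⟨!![1, 2; 0, 1], by norm_num [Matrix.det_fin_two_of]⟩

/-- The matrix `[[1, 0], [2, 1]]` as an element of `SL(2, ℤ)`. -/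
def dMat : Matrix.SpecialLinearGroup (Fin 2) ℤ :=
  ⟨!![1, 0; 2, 1], by norm_num [Matrix.det_fin_two_of]⟩

/-- The group homomorphism `f : F₂ → SL(2, ℤ)` determined by `f(c) = [[1, 2], [0, 1]]` and
`f(d) = [[1, 0], [2, 1]]`, where `c = FreeGroup.of false` and `d = FreeGroup.of true`. -/
noncomputable def fHom : FreeGroup Bool →* Matrix.SpecialLinearGroup (Fin 2) ℤ :=
  FreeGroup.lift fun b : Bool => if b then dMat else cMat

/-- First diagonal entry of `M Mᵀ`. -/
def pF (M : Matrix.SpecialLinearGroup (Fin 2) ℤ) : ℤ := M.1 0 0 ^ 2 + M.1 0 1 ^ 2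

/-- Off-diagonal entry of `M Mᵀ`. -/
def qF (M : Matrix.SpecialLinearGroup (Fin 2) ℤ) : ℤ := M.1 0 0 * M.1 1 0 + M.1 0 1 * M.1 1 1

/-- Second diagonal entry of `M Mᵀ`. -/
def rF (M : Matrix.SpecialLinearGroup (Fin 2) ℤ) : ℤ := M.1 1 0 ^ 2 + M.1 1 1 ^ 2

lemma disc (M : Matrix.SpecialLinearGroup (Fin 2) ℤ) : pF M * rF M - qF M ^ 2 = 1 := by
  have h := M.2
  rw [Matrix.det_fin_two] at h
  have : pF M * rF M - qF M ^ 2 = (M.1 0 0 * M.1 1 1 - M.1 0 1 * M.1 1 0) ^ 2 := by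
    unfold pF qF rF; ring
  rw [this, h]; norm_num

lemma pF_pos (M : Matrix.SpecialLinearGroup (Fin 2) ℤ) : 0 < pF M := by
  have h := disc M
  have h0 : 0 ≤ pF M := by unfold pF; positivity
  rcases h0.lt_or_eq with h1 | h1
  · exact h1
  · rw [← h1] at h; nlinarith [sq_nonneg (qF M)]

lemma rF_pos (M : Matrix.SpecialLinearGroup (Fin 2) ℤ) : 0 < rF M := by
  have h := disc M
  have h0 : 0 ≤ rF M := by unfold rF; positivity
  rcases h0.lt_or_eq with h1 | h1
  · exact h1
  · rw [← h1] at h; nlinarith [sq_nonneg (qF M)]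

lemma cMat_val :
    cMat.1 = !![1, 2; 0, 1] := rfl

lemma dMat_val :
    dMat.1 = !![1, 0; 2, 1] := rfl

lemma rF_c (M : Matrix.SpecialLinearGroup (Fin 2) ℤ) : rF (cMat * M) = rF M := by
  simp [rF, cMat_val, Matrix.mul_apply, Fin.sum_univ_two]

lemma qF_c (M : Matrix.SpecialLinearGroup (Fin 2) ℤ) : qF (cMat * M) = qF M + 2 * rF M := by
  simp [qF, rF, cMat_val, Matrix.mul_apply, Fin.sum_univ_two]
  ring

lemma pF_d (M : Matrix.SpecialLinearGroup (Fin 2) ℤ) : pF (dMat * M) = pF M := by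
  simp [pF, dMat_val, Matrix.mul_apply, Fin.sum_univ_two]

lemma qF_d (M : Matrix.SpecialLinearGroup (Fin 2) ℤ) : qF (dMat * M) = qF M + 2 * pF M := by
  simp [qF, pF, dMat_val, Matrix.mul_apply, Fin.sum_univ_two]
  ring

/-- Attracting sets of the generators. -/
def xSet (b : Bool) : Set (Matrix.SpecialLinearGroup (Fin 2) ℤ) :=
  if b then {M | pF M < qF M} else {M | rF M ≤ qF M}

/-- Attracting sets of the inverses of the generators. -/
def ySet (b : Bool) : Set (Matrix.SpecialLinearGroup (Fin 2) ℤ) :=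
  if b then {M | pF M ≤ -qF M} else {M | rF M < -qF M}

/-- The homomorphism `f : F₂ → SL(2, ℤ)` with `f(c) = [[1, 2], [0, 1]]` and
`f(d) = [[1, 0], [2, 1]]` is injective. -/
theorem fHom_injective : Function.Injective fHom := by
  unfold fHom
  apply FreeGroup.injective_lift_of_ping_pong _ xSet ySet
  · rintro (_ | _)
    · exact ⟨cMat, by change rF cMat ≤ qF cMat; simp [rF, qF, cMat]⟩
    · exact ⟨dMat, by change pF dMat < qF dMat; simp [pF, qF, dMat]⟩
  · rintro (_ | _) (_ | _) h <;> simp only [ne_eq, not_true_eq_false] at h <;>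
      refine Set.disjoint_left.2 fun M h1 h2 => ?_ <;>
      have hd := disc M <;> have hp := pF_pos M <;> have hr := rF_pos M <;>
      simp [xSet] at h1 h2 <;> nlinarith
  · rintro (_ | _) (_ | _) h <;> simp only [ne_eq, not_true_eq_false] at h <;>
      refine Set.disjoint_left.2 fun M h1 h2 => ?_ <;>
      have hd := disc M <;> have hp := pF_pos M <;> have hr := rF_pos M <;>
      simp [ySet] at h1 h2 <;> nlinarith
  · rintro (_ | _) (_ | _) <;>
      refine Set.disjoint_left.2 fun M h1 h2 => ?_ <;>
      have hp := pF_pos M <;> have hr := rF_pos M <;>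
      simp [xSet, ySet] at h1 h2 <;> linarith
  · rintro (_ | _) _ ⟨M, hM, rfl⟩
    · change ¬ (rF M < -qF M) at hM
      change rF (cMat * M) ≤ qF (cMat * M)
      rw [rF_c, qF_c]; linarith
    · change ¬ (pF M ≤ -qF M) at hM
      change pF (dMat * M) < qF (dMat * M)
      rw [pF_d, qF_d]; linarith
  · rintro (_ | _) _ ⟨M, hM, rfl⟩
    · change ¬ (rF M ≤ qF M) at hM
      change rF (cMat⁻¹ * M) < -qF (cMat⁻¹ * M)
      have h1 := rF_c (cMat⁻¹ * M)
      have h2 := qF_c (cMat⁻¹ * M)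
      rw [mul_inv_cancel_left] at h1 h2
      linarith
    · change ¬ (pF M < qF M) at hM
      change pF (dMat⁻¹ * M) ≤ -qF (dMat⁻¹ * M)
      have h1 := pF_d (dMat⁻¹ * M)
      have h2 := qF_d (dMat⁻¹ * M)
      rw [mul_inv_cancel_left] at h1 h2
      linarith
end

section
/- In the 3-strand braid group B₃, the group homomorphism from the free group F₂ on two generators c, d to B₃ determined by c ↦ σ₁⁴ and d ↦ σ₂⁴ is injective; in particular, the subgroup of B₃ generated by σ₁⁴ and σ₂⁴ is a free group of rank 2. -/
/-- The generator `σ₁` of `B₃`. -/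
def sigma1 : B3 := PresentedGroup.of (rels := braidRels3) 0

/-- The generator `σ₂` of `B₃`. -/
def sigma2 : B3 := PresentedGroup.of (rels := braidRels3) 1

/-- The group homomorphism `F₂ → B₃` determined by `c ↦ σ₁⁴` and `d ↦ σ₂⁴`, where
`c = FreeGroup.of false` and `d = FreeGroup.of true`. -/
noncomputable def braidEmb : FreeGroup Bool →* B3 :=
  FreeGroup.lift fun b : Bool => if b then sigma2 ^ 4 else sigma1 ^ 4

/-- Nonzero integer vectors. -/
abbrev BV : Type := {p : ℤ × ℤ // p.1 ≠ 0 ∨ p.2 ≠ 0}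

/-- The shear `(x, y) ↦ (x + y, y)`. -/
def shear1 : Equiv.Perm BV where
  toFun p := ⟨(p.1.1 + p.1.2, p.1.2), by have := p.2; dsimp only; omega⟩
  invFun p := ⟨(p.1.1 - p.1.2, p.1.2), by have := p.2; dsimp only; omega⟩
  left_inv p := by ext <;> simp
  right_inv p := by ext <;> simp

/-- The shear `(x, y) ↦ (x, y - x)`. -/
def shear2 : Equiv.Perm BV where
  toFun p := ⟨(p.1.1, p.1.2 - p.1.1), by have := p.2; dsimp only; omega⟩
  invFun p := ⟨(p.1.1, p.1.2 + p.1.1), by have := p.2; dsimp only; omega⟩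
  left_inv p := by ext <;> simp
  right_inv p := by ext <;> simp

theorem shear_braid : shear1 * shear2 * shear1 = shear2 * shear1 * shear2 := by
  ext p <;> simp [shear1, shear2]

theorem shear1_pow (p : BV) : ((shear1 ^ 4) p).1 = (p.1.1 + 4 * p.1.2, p.1.2) := by
  ext <;> simp [pow_succ, shear1] <;> ring

theorem shear2_pow (p : BV) : ((shear2 ^ 4) p).1 = (p.1.1, p.1.2 - 4 * p.1.1) := by
  ext <;> simp [pow_succ, shear2] <;> ring

theorem shear1_pow_inv (p : BV) : ((shear1 ^ 4)⁻¹ p).1 = (p.1.1 - 4 * p.1.2, p.1.2) := by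
  obtain ⟨q, rfl⟩ := (shear1 ^ 4).surjective p
  rw [Equiv.Perm.inv_def, Equiv.symm_apply_apply, shear1_pow]
  ext <;> simp

theorem shear2_pow_inv (p : BV) : ((shear2 ^ 4)⁻¹ p).1 = (p.1.1, p.1.2 + 4 * p.1.1) := by
  obtain ⟨q, rfl⟩ := (shear2 ^ 4).surjective p
  rw [Equiv.Perm.inv_def, Equiv.symm_apply_apply, shear2_pow]
  ext <;> simp

/-- The images of the free generators. -/
def shearGen (b : Bool) : Equiv.Perm BV := if b then shear2 ^ 4 else shear1 ^ 4

/-- Attracting sets. -/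
def ppX (b : Bool) : Set BV :=
  {p | if b then 2 * p.1.1 ^ 2 ≤ -(p.1.1 * p.1.2) else 2 * p.1.2 ^ 2 ≤ p.1.1 * p.1.2}

/-- Repelling sets. -/
def ppY (b : Bool) : Set BV :=
  {p | if b then -(p.1.1 * p.1.2) < -2 * p.1.1 ^ 2 else p.1.1 * p.1.2 < -2 * p.1.2 ^ 2}

theorem pp_aux (x y : ℤ) (h : x ≠ 0 ∨ y ≠ 0) : 0 < x ^ 2 + y ^ 2 := by
  rcases h with h | h <;> positivity

theorem shearGen_injective : Function.Injective (FreeGroup.lift shearGen) := by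
  apply FreeGroup.injective_lift_of_ping_pong shearGen ppX ppY
  · rintro (_ | _)
    · exact ⟨⟨(1, 0), by simp⟩, by simp [ppX]⟩
    · exact ⟨⟨(0, 1), by simp⟩, by simp [ppX]⟩
  · rintro (_ | _) (_ | _) hij <;> first | exact absurd rfl hij | skip
    all_goals
      refine Set.disjoint_left.2 ?_
      rintro ⟨⟨x, y⟩, h⟩ h1 h2
      simp [ppX] at h1 h2
      nlinarith [pp_aux x y h, sq_nonneg (x + y), sq_nonneg (x - y)]
  · rintro (_ | _) (_ | _) hij <;> first | exact absurd rfl hij | skip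
    all_goals
      refine Set.disjoint_left.2 ?_
      rintro ⟨⟨x, y⟩, h⟩ h1 h2
      simp [ppY] at h1 h2
      nlinarith [pp_aux x y h, sq_nonneg (x + y), sq_nonneg (x - y)]
  · rintro (_ | _) (_ | _)
    all_goals
      refine Set.disjoint_left.2 ?_
      rintro ⟨⟨x, y⟩, h⟩ h1 h2
      simp [ppX, ppY] at h1 h2
      nlinarith [pp_aux x y h, sq_nonneg (x + y), sq_nonneg (x - y), sq_nonneg x, sq_nonneg y]
  · rintro (_ | _) _ ⟨⟨⟨x, y⟩, h⟩, hp, rfl⟩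
    · simp [ppY] at hp
      simp [ppX, shearGen, shear1_pow]
      nlinarith
    · simp [ppY] at hp
      simp [ppX, shearGen, shear2_pow]
      nlinarith
  · rintro (_ | _) _ ⟨⟨⟨x, y⟩, h⟩, hp, rfl⟩
    · simp only [ppX, Set.mem_compl_iff, Set.mem_ofPred_eq, Bool.false_eq_true, if_false,
        not_le] at hp
      simp only [ppY, shearGen, Pi.inv_apply, Set.mem_ofPred_eq, Bool.false_eq_true, if_false,
        Equiv.Perm.smul_def, shear1_pow_inv]
      nlinarith
    · simp only [ppX, Set.mem_compl_iff, Set.mem_ofPred_eq, if_true, not_le] at hp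
      simp only [ppY, shearGen, Pi.inv_apply, Set.mem_ofPred_eq, if_true,
        Equiv.Perm.smul_def, shear2_pow_inv]
      nlinarith

theorem shear_rels : ∀ r ∈ braidRels3,
    FreeGroup.lift (fun i : Fin 2 => if i = 0 then shear1 else shear2) r = 1 := by
  intro r hr
  rw [braidRels3, Set.mem_singleton_iff] at hr
  subst hr
  rw [map_mul, map_inv, mul_inv_eq_one]
  simpa using shear_braid

/-- The action of `B₃` on nonzero integer vectors. -/
noncomputable def shearHom : B3 →* Equiv.Perm BV := PresentedGroup.toGroup shear_rels

theorem braidEmb_injective : Function.Injective braidEmb := by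
  have h1 : shearHom sigma1 = shear1 := by
    simp only [shearHom, sigma1, PresentedGroup.toGroup.of, if_true]
  have h2 : shearHom sigma2 = shear2 := by
    simp [shearHom, sigma2, PresentedGroup.toGroup.of]
  have h : shearHom.comp braidEmb = FreeGroup.lift shearGen := by
    ext1 b
    cases b <;> simp [braidEmb, shearGen, h1, h2]
  have h3 := shearGen_injective
  rw [← h, MonoidHom.coe_comp] at h3
  exact h3.of_comp

theorem braidEmb_range :
    braidEmb.range = Subgroup.closure ({sigma1 ^ 4, sigma2 ^ 4} : Set B3) := by
  rw [braidEmb, FreeGroup.range_lift_eq_closure]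
  congr 1
  ext x
  simp [eq_comm]

/-- The homomorphism `F₂ → B₃`, `c ↦ σ₁⁴`, `d ↦ σ₂⁴`, is injective; in particular, the
subgroup of `B₃` generated by `σ₁⁴` and `σ₂⁴` is a free group of rank 2. -/
theorem braid_B3_free_subgroup :
    Function.Injective braidEmb ∧
      Nonempty ((Subgroup.closure ({sigma1 ^ 4, sigma2 ^ 4} : Set B3)) ≃* FreeGroup Bool) := by
  exact ⟨braidEmb_injective, ⟨(MulEquiv.subgroupCongr braidEmb_range.symm).trans
    (MonoidHom.ofInjective braidEmb_injective).symm⟩⟩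
end
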